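/- arXiv:1404.7764 — 2 statements merged into one kernel-verified Lean document; each statement's English description precedes it below -/
import Mathlib

section
/- Fix ε > 0, β ≥ 1 and α ≥ 32β with α large enough. There exists d₀ such that the following holds for all d ≥ d₀. Let G be a d-regular bipartite graph and let 𝒢 be a graph on α·d vertices with Δ(𝒢) ≤ β·δ(𝒢) and δ(𝒢) > d^ε. Then there exist a spanning subgraph H ⊆ G and a coloring χ : V(G) → V(𝒢) such that: (Q1) every v ∈ V(H) satisfies d_H(v) ≥ δ(𝒢)/(4α); (Q2) for every v ∈ V(H), the restriction of χ to N_H(v) is injective (every neighborhood is rainbow); and (Q3) for every edge uv ∈ E(H), χ(u)χ(v) ∈ E(𝒢). -/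
open SimpleGraph

def ContainsCopy {α β : Type*} (F : SimpleGraph α) (H : SimpleGraph β) : Prop :=
  ∃ f : F →g H, Function.Injective f

abbrev GraphFamily := Set (Σ n : ℕ, SimpleGraph (Fin n))

def FamFree {β : Type*} (H : SimpleGraph β) (𝓕 : GraphFamily) : Prop :=
  ∀ F ∈ 𝓕, ¬ ContainsCopy F.2 H

noncomputable def extremalNum (n : ℕ) (𝓕 : GraphFamily) : ℕ :=
  sSup {k | ∃ H : SimpleGraph (Fin n), FamFree H 𝓕 ∧ k = H.edgeSet.ncard}

def LocallyInjective {α β : Type*} {F : SimpleGraph α} {G : SimpleGraph β}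
    (φ : F →g G) : Prop :=
  ∀ v : α, Set.InjOn φ (F.neighborSet v)

def NoLocInjHom {α β : Type*} (F : SimpleGraph α) (G : SimpleGraph β) : Prop :=
  ¬ ∃ φ : F →g G, LocallyInjective φ

def ClosedFamily (𝓕 : GraphFamily) : Prop :=
  ∀ (W : Type) [Fintype W] (G : SimpleGraph W),
    (∀ F ∈ 𝓕, NoLocInjHom F.2 G) ↔ FamFree G 𝓕

noncomputable def deg {β : Type*} (H : SimpleGraph β) (v : β) : ℕ :=
  (H.neighborSet v).ncard

noncomputable def minDeg {β : Type*} [Fintype β] (H : SimpleGraph β) : ℕ :=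
  ⨅ v, deg H v

noncomputable def maxDeg {β : Type*} [Fintype β] (H : SimpleGraph β) : ℕ :=
  ⨆ v, deg H v

def RegularDeg {β : Type*} (G : SimpleGraph β) (d : ℕ) : Prop :=
  ∀ v, deg G v = d

noncomputable def Bad {α γ : Type*} (G : SimpleGraph α) (χ : α → γ) (v : α) : ℕ :=
  {u | u ∈ G.neighborSet v ∧ ∃ v', v' ∈ G.neighborSet u ∧ v' ≠ v ∧ χ v' = χ v}.ncard

/-!
Colour the vertices of `G` uniformly at random by vertices of `𝒢`. Around a vertex `v` about
`δ(𝒢) / α` of the neighbours of the colour of `v` appear, but an edge `vu` can only be used if `u`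
sees the colour of `v` just once. Since there are `α d` colours, typically only a small fraction of
the neighbours of `v` violate this. The few exceptional vertices `v` where many do are uncoloured;
by the local lemma they supply only few of the colours around any vertex, so the other vertices
already have the required degree.

The exceptional vertices are coloured again in rounds. In each round those left over receive
independent random colours, and such a vertex keeps its colour if most of the vertices it could be
joined to neither have this colour around them nor receive it twice in the round. By the local lemma
the number of leftover vertices around any vertex halves in each round, while the number of newly
used colours stays within a convergent budget. Once it is below `δ(𝒢) / 8` the process is finished
greedily.
-/

open Finset

section Probability

variable {Ω ι : Type*} [Fintype Ω] {E F : Ω → Prop}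

open Classical BigOperators in
/-- The probability of the event `E` under the uniform distribution on the finite type `Ω`. -/
noncomputable def prob (E : Ω → Prop) : ℝ :=
  𝔼 ω, if E ω then 1 else 0

lemma prob_nonneg (E : Ω → Prop) : 0 ≤ prob E :=
  expect_nonneg fun _ _ => by positivity

lemma prob_mono (h : ∀ ω, E ω → F ω) : prob E ≤ prob F := by
  refine expect_le_expect fun ω _ => ?_
  split_ifs with hE hF
  exacts [le_rfl, absurd (h ω hE) hF, zero_le_one, le_rfl]

lemma prob_eq_card_div (E : Ω → Prop) [DecidablePred E] :
    prob E = #{ω | E ω} / Fintype.card Ω := by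
  rw [prob, Fintype.expect_eq_sum_div_card, ← sum_boole]
  congr!

lemma prob_true [Nonempty Ω] : prob (fun _ : Ω => True) = 1 := by
  simp [prob_eq_card_div]

lemma prob_le_of_forall_imp {p : ℝ} (hp : 0 ≤ p) (h : ∀ ω, E ω → prob E ≤ p) : prob E ≤ p := by
  by_cases hE : ∃ ω, E ω
  · exact hE.elim h
  · exact (le_of_eq (by simp [prob, not_exists.mp hE])).trans hp

-- Markov's inequality for the weighted number of those `F i` that occur.
lemma prob_le_sum_mul_prob {s : Finset ι} {w : ι → ℝ} {F : ι → Ω → Prop}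
    (hw : ∀ i ∈ s, 0 ≤ w i)
    (hE : ∀ ω, E ω → ∃ t ⊆ s, 1 ≤ ∑ i ∈ t, w i ∧ ∀ i ∈ t, F i ω) :
    prob E ≤ ∑ i ∈ s, w i * prob (F i) := by
  classical
  simp only [prob, mul_expect]
  rw [← expect_sum_comm]
  refine expect_le_expect fun ω _ => ?_
  have hnonneg : ∀ i ∈ s, 0 ≤ w i * if F i ω then (1 : ℝ) else 0 := fun i hi =>
    mul_nonneg (hw i hi) (by positivity)
  split_ifs with h
  · obtain ⟨t, hts, ht, hF⟩ := hE ω h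
    calc (1 : ℝ) ≤ ∑ i ∈ t, w i := ht
      _ = ∑ i ∈ t, w i * if F i ω then 1 else 0 :=
        sum_congr rfl fun i hi => by rw [if_pos (hF i hi), mul_one]
      _ ≤ ∑ i ∈ s, w i * if F i ω then 1 else 0 :=
        sum_le_sum_of_subset_of_nonneg hts fun i hi _ => hnonneg i hi
  · exact sum_nonneg hnonneg

lemma prob_le_sum_of_imp_exists {s : Finset ι} {F : ι → Ω → Prop}
    (h : ∀ ω, E ω → ∃ i ∈ s, F i ω) : prob E ≤ ∑ i ∈ s, prob (F i) := by
  simpa using prob_le_sum_mul_prob (w := fun _ => 1) (fun _ _ => zero_le_one) fun ω hω =>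
    have ⟨i, hi, hF⟩ := h ω hω
    ⟨{i}, singleton_subset_iff.mpr hi, by simp, by simpa using hF⟩

lemma prob_le_add_of_imp_or {A B : Ω → Prop} (h : ∀ ω, E ω → A ω ∨ B ω) :
    prob E ≤ prob A + prob B := by
  simpa using prob_le_sum_of_imp_exists (s := univ) (F := fun b : Bool => cond b A B) fun ω hω => by
    simpa [or_comm] using h ω hω

lemma prob_le_prod_sum_mul [Fintype ι] {κ : Type*} {ρ : ℝ} {Q : ι → Finset κ}
    {w : ι → κ → ℝ} {A : ι → κ → Ω → Prop} (hw : ∀ x, ∀ q ∈ Q x, 0 ≤ w x q)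
    (hE : ∀ ω, E ω → ∀ x, ∃ t ⊆ Q x, 1 ≤ ∑ q ∈ t, w x q ∧ ∀ q ∈ t, A x q ω)
    (hA : ∀ p : ι → κ, prob (fun ω => E ω ∧ ∀ x, A x (p x) ω) ≤ ρ ^ Fintype.card ι) :
    prob E ≤ ∏ x, (∑ q ∈ Q x, w x q) * ρ := by
  classical
  have hprod : ∀ p ∈ Fintype.piFinset Q, 0 ≤ ∏ x, w x (p x) := fun p hp =>
    prod_nonneg fun x _ => hw x _ (Fintype.mem_piFinset.mp hp x)
  calc prob E
      ≤ ∑ p ∈ Fintype.piFinset Q, (∏ x, w x (p x)) * prob (fun ω => E ω ∧ ∀ x, A x (p x) ω) := by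
        refine prob_le_sum_mul_prob hprod fun ω hω => ?_
        choose t htQ ht htA using hE ω hω
        refine ⟨Fintype.piFinset t, Fintype.piFinset_subset _ _ htQ, ?_, fun p hp =>
          ⟨hω, fun x => htA x _ (Fintype.mem_piFinset.mp hp x)⟩⟩
        rw [← prod_univ_sum]
        exact one_le_prod fun x _ => ht x
    _ ≤ ∑ p ∈ Fintype.piFinset Q, (∏ x, w x (p x)) * ρ ^ Fintype.card ι :=
        sum_le_sum fun p hp => mul_le_mul_of_nonneg_left (hA p) (hprod p hp)
    _ = ∏ x, (∑ q ∈ Q x, w x q) * ρ := by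
        rw [← sum_mul, ← prod_univ_sum, prod_mul_distrib, prod_const, card_univ]

section Tail

variable {P : Finset ι} {R : Finset ι → Ω → Prop} {q : ℝ}

-- If `E` holds then at least `2 ^ k` of the events `R K` do.
lemma prob_le_one_add_pow_div_two_pow {k : ℕ} (hR : ∀ K ⊆ P, prob (R K) ≤ q ^ #K)
    (hE : ∀ ω, E ω → ∃ K₀ ⊆ P, k ≤ #K₀ ∧ ∀ K ⊆ K₀, R K ω) :
    prob E ≤ (1 + q) ^ #P / 2 ^ k := by
  have hpow : (1 + q) ^ #P = ∑ K ∈ P.powerset, q ^ #K := by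
    simpa using prod_one_add (f := fun _ => q) P
  calc prob E ≤ ∑ K ∈ P.powerset, (2 ^ k)⁻¹ * prob (R K) := by
        refine prob_le_sum_mul_prob (fun _ _ => by positivity) fun ω hω => ?_
        obtain ⟨K₀, hK₀P, hk, hK₀⟩ := hE ω hω
        refine ⟨K₀.powerset, powerset_mono.mpr hK₀P, ?_, fun K hK => hK₀ K (mem_powerset.mp hK)⟩
        rw [sum_const, card_powerset, nsmul_eq_mul, ← div_eq_mul_inv, one_le_div (by positivity)]
        exact_mod_cast Nat.pow_le_pow_right two_pos hk
    _ ≤ ∑ K ∈ P.powerset, (2 ^ k)⁻¹ * q ^ #K := by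
        gcongr with K hK
        exact hR K (mem_powerset.mp hK)
    _ = (1 + q) ^ #P / 2 ^ k := by rw [hpow, ← mul_sum, inv_mul_eq_div]

lemma exp_one_fourth_le : Real.exp (1 / 4) ≤ 4 / 3 := by
  have h := Real.add_one_le_exp (-(1 / 4 : ℝ))
  rw [Real.exp_neg] at h
  rw [← inv_le_inv₀ (by norm_num) (Real.exp_pos _)]
  norm_num at h ⊢
  linarith

lemma prob_le_two_thirds_pow {t : ℝ} {T : ℕ} (hq : 0 ≤ q) (hqt : q * #P ≤ t / 4) (hT : T ≤ t)
    (hR : ∀ K ⊆ P, prob (R K) ≤ q ^ #K)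
    (hE : ∀ ω, E ω → ∃ K₀ ⊆ P, t ≤ #K₀ ∧ ∀ K ⊆ K₀, R K ω) :
    prob E ≤ (2 / 3) ^ T := by
  have hTk : T ≤ ⌈t⌉₊ := by exact_mod_cast hT.trans (Nat.le_ceil t)
  calc prob E ≤ (1 + q) ^ #P / 2 ^ ⌈t⌉₊ := by
        refine prob_le_one_add_pow_div_two_pow hR fun ω hω => ?_
        obtain ⟨K₀, hK₀P, ht, hK₀⟩ := hE ω hω
        exact ⟨K₀, hK₀P, Nat.ceil_le.mpr ht, hK₀⟩
    _ ≤ Real.exp (1 / 4) ^ ⌈t⌉₊ / 2 ^ ⌈t⌉₊ := by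
        gcongr
        calc (1 + q) ^ #P ≤ Real.exp q ^ #P := by
              gcongr
              rw [add_comm]
              exact Real.add_one_le_exp q
          _ = Real.exp (q * #P) := by rw [← Real.exp_nat_mul, mul_comm]
          _ ≤ Real.exp (⌈t⌉₊ * (1 / 4)) :=
            Real.exp_le_exp.mpr (by linarith [Nat.le_ceil t])
          _ = Real.exp (1 / 4) ^ ⌈t⌉₊ := Real.exp_nat_mul _ _
    _ ≤ (2 / 3) ^ ⌈t⌉₊ := by
        rw [← div_pow]
        exact pow_le_pow_left₀ (by positivity) (by linarith [exp_one_fourth_le]) _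
    _ ≤ (2 / 3) ^ T := pow_le_pow_of_le_one (by norm_num) (by norm_num) hTk

end Tail

end Probability

section RandomFunction

variable {V C : Type*} [Fintype V] [DecidableEq V] [Fintype C]

lemma prob_forall_mem [Nonempty C] (K : Finset V) (A : V → Finset C) :
    prob (fun f : V → C => ∀ x ∈ K, f x ∈ A x) = ∏ x ∈ K, (#(A x) / Fintype.card C : ℝ) := by
  classical
  have hevent : ({f | ∀ x ∈ K, f x ∈ A x} : Finset (V → C))
      = Fintype.piFinset fun x => if x ∈ K then A x else univ := by
    ext f
    simp only [mem_filter_univ, Fintype.mem_piFinset]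
    exact forall_congr' fun x => by split_ifs with hx <;> simp [hx]
  have hcard : (Fintype.card (V → C) : ℝ) = ∏ _x : V, (Fintype.card C : ℝ) := by
    simp
  rw [prob_eq_card_div, hevent, Fintype.card_piFinset, hcard, Nat.cast_prod, ← prod_div_distrib,
    ← prod_subset (subset_univ K)]
  · exact prod_congr rfl fun x hx => by rw [if_pos hx]
  · intro x _ hx
    simp [hx]

lemma prob_forall_mem_le [Nonempty C] {K : Finset V} {A : V → Finset C} {q : ℝ}
    (h : ∀ x ∈ K, #(A x) / Fintype.card C ≤ q) :
    prob (fun f : V → C => ∀ x ∈ K, f x ∈ A x) ≤ q ^ #K := by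
  rw [prob_forall_mem, ← prod_const]
  exact prod_le_prod (fun _ _ => by positivity) h

lemma prob_forall_eq [Nonempty C] (K : Finset V) (g : V → C) :
    prob (fun f : V → C => ∀ x ∈ K, f x = g x) = (1 / Fintype.card C) ^ #K := by
  simpa using prob_forall_mem K fun x => {g x}

lemma prob_le_card_filter_mem [Nonempty C] [DecidableEq C] {P : Finset V} {A : V → Finset C}
    {q t : ℝ} {T : ℕ} (hA : ∀ x ∈ P, #(A x) / Fintype.card C ≤ q) (hq : 0 ≤ q)
    (hqt : q * #P ≤ t / 4) (hT : T ≤ t) :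
    prob (fun f : V → C => t ≤ #{x ∈ P | f x ∈ A x}) ≤ (2 / 3) ^ T := by
  refine prob_le_two_thirds_pow (R := fun K f => ∀ x ∈ K, f x ∈ A x) hq hqt hT
    (fun K hK => prob_forall_mem_le fun x hx => hA x (hK hx))
    fun f hf => ⟨_, filter_subset _ _, hf, fun K hK x hx => (mem_filter.mp (hK hx)).2⟩

section Swap
open scoped BigOperators

lemma expect_piecewise_swap (S : Finset V) (X : (V → C) → (V → C) → ℝ) :
    𝔼 f, 𝔼 g, X (S.piecewise f g) (S.piecewise g f) = 𝔼 f, 𝔼 g, X f g := by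
  simp only [← expect_product' univ univ, univ_product_univ]
  have hinv : Function.Involutive fun p : (V → C) × (V → C) =>
      (S.piecewise p.1 p.2, S.piecewise p.2 p.1) := fun p => by
    ext x <;> by_cases hx : x ∈ S <;> simp [hx]
  exact Fintype.expect_bijective _ hinv.bijective _ _ fun _ => rfl

lemma prob_le_of_forall_prob_piecewise_le [Nonempty C] (S : Finset V) {E : (V → C) → Prop} {p : ℝ}
    (h : ∀ g, prob (fun f => E (S.piecewise f g)) ≤ p) : prob E ≤ p := by
  classical
  calc prob E = 𝔼 f : V → C, 𝔼 g : V → C, if E (S.piecewise f g) then 1 else 0 := by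
        rw [expect_piecewise_swap S fun f _ => if E f then 1 else 0]
        simp [prob]
    _ = 𝔼 g : V → C, prob fun f => E (S.piecewise f g) := by
        rw [expect_comm]
        congr!
    _ ≤ p := expect_le (univ_nonempty) fun g _ => h g

lemma prob_and_eq_mul [Nonempty C] {S : Finset V} {E F : (V → C) → Prop} (hE : DependsOn E S)
    (hF : DependsOn F (Sᶜ : Set V)) : prob (fun f => E f ∧ F f) = prob E * prob F := by
  classical
  calc prob (fun f => E f ∧ F f)
      = 𝔼 f : V → C, 𝔼 g : V → C, if E (S.piecewise f g) ∧ F (S.piecewise f g) then 1 else 0 := by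
        rw [expect_piecewise_swap S fun f _ => if E f ∧ F f then 1 else 0]
        simp only [prob, Fintype.expect_const]
        congr!
    _ = 𝔼 f : V → C, 𝔼 g : V → C, (if E f then 1 else 0) * if F g then 1 else 0 := by
        refine expect_congr rfl fun f _ => expect_congr rfl fun g _ => ?_
        rw [hE (fun x hx => S.piecewise_eq_of_mem f g hx : ∀ x ∈ (S : Set V), _ = f x),
          hF (fun x hx => S.piecewise_eq_of_notMem f g hx : ∀ x ∈ (Sᶜ : Set V), _ = g x),
          ite_and, ite_mul, one_mul, zero_mul]
    _ = prob E * prob F := by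
        simp only [← mul_expect, ← expect_mul]
        rfl

end Swap

lemma prob_forall_exists_eq_le [Nonempty C] (P K : Finset V) :
    prob (fun f : V → C => ∀ x ∈ K, ∃ y ∈ P \ K, f y = f x) ≤
      (#P / Fintype.card C : ℝ) ^ #K := by
  classical
  refine prob_le_of_forall_prob_piecewise_le K fun g => ?_
  calc _ ≤ prob (fun f : V → C => ∀ x ∈ K, f x ∈ (P \ K).image g) := by
        refine prob_mono fun f hf x hx => ?_
        obtain ⟨y, hy, hyx⟩ := hf x hx
        rw [K.piecewise_eq_of_mem f g hx,
          K.piecewise_eq_of_notMem f g (mem_sdiff.mp hy).2] at hyx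
        exact mem_image.mpr ⟨y, hy, hyx⟩
    _ ≤ _ := prob_forall_mem_le fun x _ => by
        gcongr
        exact card_image_le.trans (card_le_card sdiff_subset)

end RandomFunction

section LocalLemma

variable {V C ι : Type*}

/-- The event that none of the events `E i` with `i ∈ T` occurs. -/
def Avoids {Ω : Type*} (E : ι → Ω → Prop) (T : Finset ι) (ω : Ω) : Prop :=
  ∀ i ∈ T, ¬ E i ω

lemma prob_avoids_le_two_mul {Ω : Type*} [Fintype Ω] {E : ι → Ω → Prop} {T T₁ T₂ : Finset ι}
    {D : ℕ} (hT : ∀ j ∈ T, j ∈ T₁ ∨ j ∈ T₂) (hcard : #T₁ ≤ D)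
    (h : ∀ j ∈ T₁, prob (fun ω => E j ω ∧ Avoids E T₂ ω) ≤ 1 / (2 * D) * prob (Avoids E T₂)) :
    prob (Avoids E T₂) ≤ 2 * prob (Avoids E T) := by
  have hsplit : prob (Avoids E T₂) ≤
      prob (Avoids E T) + prob (fun ω => ∃ j ∈ T₁, E j ω ∧ Avoids E T₂ ω) := by
    refine prob_le_add_of_imp_or fun ω hω => ?_
    by_cases hTω : Avoids E T ω
    · exact .inl hTω
    · obtain ⟨j, hjT, hj⟩ : ∃ j ∈ T, E j ω := by simpa [Avoids] using hTω
      exact .inr ⟨j, (hT j hjT).resolve_right fun hj₂ => hω j hj₂ hj, hj, hω⟩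
  have hclose : prob (fun ω => ∃ j ∈ T₁, E j ω ∧ Avoids E T₂ ω) ≤ prob (Avoids E T₂) / 2 :=
    calc _ ≤ ∑ j ∈ T₁, prob (fun ω => E j ω ∧ Avoids E T₂ ω) :=
          prob_le_sum_of_imp_exists fun _ hω => hω
      _ ≤ #T₁ * (1 / (2 * D) * prob (Avoids E T₂)) := by
          rw [← nsmul_eq_mul]
          exact sum_le_card_nsmul _ _ _ h
      _ = #T₁ / D * (prob (Avoids E T₂) / 2) := by ring
      _ ≤ 1 * (prob (Avoids E T₂) / 2) := by
          have := prob_nonneg (Avoids E T₂)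
          gcongr
          exact div_le_one_of_le₀ (by exact_mod_cast hcard) (Nat.cast_nonneg D)
      _ = prob (Avoids E T₂) / 2 := one_mul _
  linarith

variable [Fintype V] [DecidableEq V] [Fintype C] [Nonempty C]
  {E : ι → (V → C) → Prop} {S : ι → Finset V} {D : ℕ}

lemma prob_and_avoids_le [Fintype ι] (hdep : ∀ i, DependsOn (E i) (S i))
    (hD : ∀ i, #{j | ¬ Disjoint (S i) (S j)} ≤ D) (hp : ∀ i, prob (E i) ≤ 1 / (4 * D))
    (T : Finset ι) (i : ι) :
    prob (fun f => E i f ∧ Avoids E T f) ≤ 1 / (2 * D) * prob (Avoids E T) := by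
  induction T using Finset.strongInduction generalizing i with
  | H T ih =>
  let far : Finset ι := {j ∈ T | Disjoint (S i) (S j)}
  let near : Finset ι := {j ∈ T | ¬ Disjoint (S i) (S j)}
  have hindep : prob (fun f => E i f ∧ Avoids E far f) = prob (E i) * prob (Avoids E far) := by
    refine prob_and_eq_mul (hdep i) fun f g hfg => propext <| forall₂_congr fun j hj =>
      not_congr <| iff_of_eq <| hdep j fun x hx => hfg x fun hxi => ?_
    exact disjoint_left.mp (mem_filter.mp hj).2 hxi hx
  have hfar : prob (Avoids E far) ≤ 2 * prob (Avoids E T) := by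
    refine prob_avoids_le_two_mul (T₁ := near) (D := D) (fun j hj => ?_) ?_ fun j hj => ?_
    · by_cases h : Disjoint (S i) (S j) <;> simp [near, far, hj, h]
    · exact (card_le_card (filter_subset_filter _ (subset_univ T))).trans (hD i)
    · obtain ⟨hjT, hj⟩ := mem_filter.mp hj
      exact ih far (filter_ssubset.mpr ⟨j, hjT, hj⟩) j
  calc prob (fun f => E i f ∧ Avoids E T f)
      ≤ prob (fun f => E i f ∧ Avoids E far f) :=
        prob_mono fun f hf => ⟨hf.1, fun j hj => hf.2 j (mem_filter.mp hj).1⟩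
    _ ≤ 1 / (4 * D) * (2 * prob (Avoids E T)) := by
        rw [hindep]
        exact mul_le_mul (hp i) hfar (prob_nonneg _) (by positivity)
    _ = 1 / (2 * D) * prob (Avoids E T) := by ring

lemma prob_avoids_pos [Fintype ι] (hdep : ∀ i, DependsOn (E i) (S i)) (hD₀ : 0 < D)
    (hD : ∀ i, #{j | ¬ Disjoint (S i) (S j)} ≤ D) (hp : ∀ i, prob (E i) ≤ 1 / (4 * D))
    (T : Finset ι) : 0 < prob (Avoids E T) := by
  classical
  induction T using Finset.induction_on with
  | empty =>
    have : Avoids E ∅ = fun _ => True := by simp [funext_iff, Avoids]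
    rw [this, prob_true]
    exact one_pos
  | insert i T _ ih =>
    have hsplit : prob (Avoids E T) ≤
        prob (Avoids E (insert i T)) + prob (fun f => E i f ∧ Avoids E T f) := by
      refine prob_le_add_of_imp_or fun f hf => ?_
      by_cases hi : E i f
      · exact .inr ⟨hi, hf⟩
      · exact .inl (forall_mem_insert _ _ _ |>.mpr ⟨hi, hf⟩)
    have hhalf : 1 / (2 * D : ℝ) ≤ 1 / 2 :=
      one_div_le_one_div_of_le two_pos (by
        have : (1 : ℝ) ≤ D := by exact_mod_cast hD₀
        linarith)
    nlinarith [prob_and_avoids_le hdep hD hp T i]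

/-- The symmetric Lovász local lemma for a uniformly random function. -/
theorem exists_forall_not_of_dependsOn [Fintype ι] (hdep : ∀ i, DependsOn (E i) (S i))
    (hD₀ : 0 < D) (hD : ∀ i, #{j | ¬ Disjoint (S i) (S j)} ≤ D)
    (hp : ∀ i, prob (E i) ≤ 1 / (4 * D)) : ∃ f, ∀ i, ¬ E i f := by
  by_contra! hE
  refine (prob_avoids_pos hdep hD₀ hD hp univ).not_ge ?_
  refine prob_le_of_forall_imp le_rfl fun f hf => ?_
  obtain ⟨i, hi⟩ := hE f
  exact absurd hi (hf i (mem_univ i))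

end LocalLemma

section WalkBall

variable {V C : Type*} [Fintype V] {G : SimpleGraph V} {u v : V} {k m : ℕ}

open Classical in
/-- The closed ball of radius `k` around `v` in `G`: the vertices joined to `v` by a walk of length
at most `k`. -/
noncomputable def walkBall (G : SimpleGraph V) (k : ℕ) (v : V) : Finset V :=
  {x | ∃ p : G.Walk v x, p.length ≤ k}

lemma mem_walkBall : u ∈ walkBall G k v ↔ ∃ p : G.Walk v u, p.length ≤ k := by
  simp [walkBall]

lemma self_mem_walkBall (k : ℕ) (v : V) : v ∈ walkBall G k v :=
  mem_walkBall.mpr ⟨.nil, Nat.zero_le k⟩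

lemma mem_walkBall_succ_of_adj {w : V} (h : G.Adj v w) (hu : u ∈ walkBall G k w) :
    u ∈ walkBall G (k + 1) v := by
  obtain ⟨p, hp⟩ := mem_walkBall.mp hu
  exact mem_walkBall.mpr ⟨.cons h p, by simpa using hp⟩

lemma mem_walkBall_add_of_mem {x : V} (hu : x ∈ walkBall G k u) (hv : x ∈ walkBall G m v) :
    v ∈ walkBall G (k + m) u := by
  obtain ⟨p, hp⟩ := mem_walkBall.mp hu
  obtain ⟨q, hq⟩ := mem_walkBall.mp hv
  exact mem_walkBall.mpr ⟨p.append q.reverse, by simpa using add_le_add hp hq⟩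

lemma card_walkBall_le [DecidableRel G.Adj] {d : ℕ} (hd : ∀ v, G.degree v ≤ d) (k : ℕ) (v : V) :
    #(walkBall G k v) ≤ (d + 1) ^ k := by
  classical
  induction k generalizing v with
  | zero =>
    refine card_le_one.mpr fun a ha b hb => ?_
    obtain ⟨p, hp⟩ := mem_walkBall.mp ha
    obtain ⟨q, hq⟩ := mem_walkBall.mp hb
    exact (p.eq_of_length_eq_zero (by omega)).symm.trans (q.eq_of_length_eq_zero (by omega))
  | succ k ih =>
    have hsub : walkBall G (k + 1) v ⊆ insert v ((G.neighborFinset v).biUnion (walkBall G k)) := by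
      intro x hx
      obtain ⟨p, hp⟩ := mem_walkBall.mp hx
      cases p with
      | nil => exact mem_insert_self _ _
      | cons h p =>
        refine mem_insert_of_mem (mem_biUnion.mpr ⟨_, (G.mem_neighborFinset v _).mpr h, ?_⟩)
        exact mem_walkBall.mpr ⟨p, by simpa using hp⟩
    have hunion : #((G.neighborFinset v).biUnion (walkBall G k)) ≤ d * (d + 1) ^ k :=
      (card_biUnion_le_card_mul _ _ _ fun w _ => ih w).trans (Nat.mul_le_mul_right _ (hd v))
    calc #(walkBall G (k + 1) v) ≤ d * (d + 1) ^ k + 1 :=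
          (card_le_card hsub).trans ((card_insert_le _ _).trans (Nat.add_le_add_right hunion 1))
      _ ≤ (d + 1) ^ (k + 1) := by
          have := Nat.one_le_pow k (d + 1) d.succ_pos
          rw [pow_succ]
          linarith

theorem exists_forall_not_of_dependsOn_walkBall [DecidableEq V] [DecidableRel G.Adj] [Fintype C]
    [Nonempty C] {d : ℕ} (hd : ∀ v, G.degree v ≤ d) {E : V → (V → C) → Prop}
    (hdep : ∀ v, DependsOn (E v) (walkBall G k v))
    (hp : ∀ v, prob (E v) ≤ 1 / (4 * (d + 1) ^ (2 * k))) : ∃ f, ∀ v, ¬ E v f := by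
  refine exists_forall_not_of_dependsOn (D := (d + 1) ^ (2 * k)) hdep (by positivity)
    (fun u => ?_) fun v => by exact_mod_cast hp v
  refine (card_le_card fun v hv => ?_).trans (card_walkBall_le hd (2 * k) u)
  obtain ⟨x, hxu, hxv⟩ := not_disjoint_iff.mp (mem_filter_univ v |>.mp hv)
  rw [two_mul]
  exact mem_walkBall_add_of_mem hxu hxv

end WalkBall

section Collisions

variable {V C ι : Type*} [DecidableEq ι]

lemma prob_forall_partner_le [Fintype ι] [Fintype C] [Nonempty C] (K : Finset ι) (p : K → C × ι) :
    prob (fun f : ι → C => Set.InjOn f K ∧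
      ∀ x : K, f x = (p x).1 ∧ (p x).2 ≠ x ∧ f (p x).2 = (p x).1) ≤
      (1 / Fintype.card C ^ 2 : ℝ) ^ #K := by
  refine prob_le_of_forall_imp (by positivity) fun f₀ ⟨hinj, hf₀⟩ => ?_
  let partners : Finset ι := univ.image fun x : K => (p x).2
  have hcard : #partners = #K := by
    rw [card_image_of_injective, card_univ, Fintype.card_coe]
    intro x y hxy
    refine Subtype.ext (hinj x.2 y.2 ?_)
    rw [(hf₀ x).1, (hf₀ y).1, ← (hf₀ x).2.2, ← (hf₀ y).2.2]
    exact congrArg f₀ hxy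
  have hdisj : Disjoint K partners := by
    refine disjoint_left.mpr fun z hz hzp => ?_
    obtain ⟨x, -, rfl⟩ := mem_image.mp hzp
    exact (hf₀ x).2.1 (hinj hz x.2 ((hf₀ x).2.2.trans (hf₀ x).1.symm))
  calc _ ≤ prob (fun f : ι → C => ∀ x ∈ K ∪ partners, f x = f₀ x) := by
        refine prob_mono fun f hf x hx => ?_
        rcases mem_union.mp hx with hx | hx
        · exact (hf.2 ⟨x, hx⟩).1.trans (hf₀ ⟨x, hx⟩).1.symm
        · obtain ⟨y, -, rfl⟩ := mem_image.mp hx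
          exact (hf.2 y).2.2.trans (hf₀ y).2.2.symm
    _ = _ := by
        rw [prob_forall_eq, card_union_of_disjoint hdisj, hcard, ← two_mul, pow_mul, one_div_pow]

variable [DecidableEq C] {I : V → Finset ι} {M : Finset V} {f g : ι → C} {x : ι}

/-- The elements `v` of `M` whose incidence set `I v` contains an index other than `x` with the same
colour as `x`. -/
def repeated (I : V → Finset ι) (M : Finset V) (f : ι → C) (x : ι) : Finset V :=
  {v ∈ M | ∃ y ∈ I v, y ≠ x ∧ f y = f x}

lemma repeated_subset : repeated I M f x ⊆ M :=
  filter_subset _ _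

lemma repeated_congr (hx : f x = g x) (h : ∀ v ∈ M, ∀ y ∈ I v, f y = g y) :
    repeated I M f x = repeated I M g x :=
  filter_congr fun v hv => exists_congr fun y => and_congr_right fun hy => by rw [h v hv y hy, hx]

variable [Fintype ι]

lemma card_repeated_le_sum :
    #(repeated I M f x) ≤ ∑ y with y ≠ x ∧ f y = f x, #{v ∈ M | y ∈ I v} := by
  classical
  refine (card_le_card fun v hv => ?_).trans card_biUnion_le
  obtain ⟨hvM, y, hyv, hy⟩ := mem_filter.mp hv
  exact mem_biUnion.mpr ⟨y, mem_filter_univ y |>.mpr hy, mem_filter.mpr ⟨hvM, hyv⟩⟩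

lemma sum_card_filter_mem_le {r : ℕ} (hI : ∀ v, #(I v) ≤ r) (M : Finset V) :
    ∑ y, #{v ∈ M | y ∈ I v} ≤ #M * r := by
  have hswap := sum_card_bipartiteAbove_eq_sum_card_bipartiteBelow (s := univ) (t := M)
    fun y v => y ∈ I v
  simp only [bipartiteAbove, bipartiteBelow, filter_univ_mem] at hswap
  exact hswap.trans_le (sum_le_card_nsmul _ _ _ fun v _ => hI v)

-- If `θ * #M` elements of `M` are repeated, then the indices `y ≠ x` coloured like `x` have total
-- weight at least `1`, where `y` has weight `#{v ∈ M | y ∈ I v} / (θ * #M)`.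
lemma prob_forall_le_card_repeated_le [Fintype C] [Nonempty C] {r : ℕ} (hI : ∀ v, #(I v) ≤ r)
    {θ : ℝ} (hθ : 0 < θ) (S : Finset C) (M : ι → C → Finset V) (K : Finset ι) :
    prob (fun f : ι → C => Set.InjOn f K ∧ ∀ x ∈ K, f x ∈ S ∧ (M x (f x)).Nonempty ∧
      θ * #(M x (f x)) ≤ #(repeated I (M x (f x)) f x)) ≤
      (#S * r / (θ * Fintype.card C ^ 2) : ℝ) ^ #K := by
  let w (x : K) (q : C × ι) : ℝ := #{v ∈ M x q.1 | q.2 ∈ I v} / (θ * #(M x q.1))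
  have hw (x : K) (q : C × ι) : 0 ≤ w x q := by positivity
  have hsum (x : K) : ∑ q ∈ S ×ˢ univ, w x q ≤ #S * (r / θ) := by
    rw [sum_product, ← nsmul_eq_mul]
    refine sum_le_card_nsmul _ _ _ fun c _ => ?_
    simp only [w, ← sum_div]
    refine div_le_of_le_mul₀ (by positivity) (by positivity) ?_
    calc (∑ y, #{v ∈ M x c | y ∈ I v} : ℝ) ≤ #(M x c) * r := by
          exact_mod_cast sum_card_filter_mem_le hI (M x c)
      _ = r / θ * (θ * #(M x c)) := by field_simp
  calc _ ≤ ∏ x : K, (∑ q ∈ S ×ˢ univ, w x q) * (1 / Fintype.card C ^ 2 : ℝ) := by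
        refine prob_le_prod_sum_mul
          (A := fun (x : K) q f => f x = q.1 ∧ q.2 ≠ x ∧ f q.2 = q.1) (fun x q _ => hw x q)
          (fun f hf x => ?_) fun p => ?_
        · obtain ⟨hS, hM, hrep⟩ := hf.2 x x.2
          refine ⟨{f x} ×ˢ ({y | y ≠ x ∧ f y = f x} : Finset ι),
            product_subset_product (singleton_subset_iff.mpr hS) (subset_univ _), ?_, ?_⟩
          · have := hM.card_pos
            simp only [w, sum_product, sum_singleton, ← sum_div]
            rw [one_le_div (by positivity)]
            exact hrep.trans (by exact_mod_cast card_repeated_le_sum)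
          · rintro ⟨c, y⟩ hcy
            obtain ⟨hy, rfl⟩ : (y ≠ x ∧ f y = f x) ∧ f x = c := by simpa using hcy
            exact ⟨rfl, hy⟩
        · rw [Fintype.card_coe]
          exact (prob_mono fun f hf => ⟨hf.1.1, hf.2⟩).trans (prob_forall_partner_le K p)
    _ ≤ ∏ _x : K, (#S * r / (θ * Fintype.card C ^ 2) : ℝ) := by
        refine prod_le_prod
          (fun x _ => mul_nonneg (sum_nonneg fun q _ => hw x q) (by positivity)) fun x _ => ?_
        calc _ ≤ #S * (r / θ) * (1 / Fintype.card C ^ 2 : ℝ) := by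
              gcongr
              exact hsum x
          _ = _ := by field_simp
    _ = _ := by rw [prod_const, card_univ, Fintype.card_coe]

end Collisions

section RepeatedTail

variable {V C ι : Type*} [DecidableEq ι] {P : Finset ι} {t : ℝ} {T : ℕ}

lemma exists_injOn_or_forall_exists_eq (B : Finset ι) (f : ι → C) (hB : 2 * t ≤ #B) :
    (∃ K ⊆ B, t ≤ #K ∧ Set.InjOn f K) ∨
      ∃ K ⊆ B, t ≤ #K ∧ ∀ x ∈ K, ∃ y ∈ B \ K, f y = f x := by
  classical
  obtain ⟨R, hRB, hinj, himage⟩ :=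
    exists_subset_injOn_image_eq_of_surjOn (f := f) (B : Set ι) (B.image f) fun c hc => by
      simpa using hc
  have hRB : R ⊆ B := mod_cast hRB
  have hcard : (#(B \ R) + #R : ℝ) = #B := mod_cast card_sdiff_add_card_eq_card hRB
  rcases le_total t #R with hR | hR
  · exact .inl ⟨R, hRB, hR, hinj⟩
  · refine .inr ⟨B \ R, sdiff_subset, by linarith, fun x hx => ?_⟩
    have hfx : f x ∈ R.image f := himage ▸ mem_image_of_mem f (mem_sdiff.mp hx).1
    obtain ⟨y, hyR, hyx⟩ := mem_image.mp hfx
    exact ⟨y, by simpa [hRB hyR] using hyR, hyx⟩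

variable [Fintype ι] [Fintype C] [Nonempty C]

lemma prob_exists_forall_exists_eq_le (hq : (#P / Fintype.card C * #P : ℝ) ≤ t / 4) (hT : T ≤ t) :
    prob (fun f : ι → C => ∃ K ⊆ P, t ≤ #K ∧ ∀ x ∈ K, ∃ y ∈ P \ K, f y = f x) ≤ (2 / 3) ^ T := by
  refine prob_le_two_thirds_pow (by positivity) hq hT (fun K _ => prob_forall_exists_eq_le P K) ?_
  rintro f ⟨K₀, hK₀, ht, hrep⟩
  refine ⟨K₀, hK₀, ht, fun K hK x hx => ?_⟩
  obtain ⟨y, hy, hyx⟩ := hrep x (hK hx)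
  exact ⟨y, sdiff_subset_sdiff subset_rfl hK hy, hyx⟩

lemma prob_exists_injOn_le_card_repeated_le [DecidableEq C] {I : V → Finset ι} {r : ℕ}
    (hI : ∀ v, #(I v) ≤ r) {θ : ℝ} (hθ : 0 < θ) (S : Finset C) (M : ι → C → Finset V)
    (hq : (#S * r / (θ * Fintype.card C ^ 2) * #P : ℝ) ≤ t / 4) (hT : T ≤ t) :
    prob (fun f : ι → C => ∃ K ⊆ P, t ≤ #K ∧ Set.InjOn f K ∧ ∀ x ∈ K, f x ∈ S ∧
      (M x (f x)).Nonempty ∧ θ * #(M x (f x)) ≤ #(repeated I (M x (f x)) f x)) ≤ (2 / 3) ^ T := by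
  refine prob_le_two_thirds_pow (by positivity) hq hT
    (fun K _ => prob_forall_le_card_repeated_le hI hθ S M K) ?_
  rintro f ⟨K₀, hK₀, ht, hinj, hrep⟩
  exact ⟨K₀, hK₀, ht, fun K hK => ⟨hinj.mono (mod_cast hK), fun x hx => hrep x (hK hx)⟩⟩

end RepeatedTail

section Extension

variable {V C ι : Type*} [DecidableEq C]
  {X A B : Finset ι} {W : ι → Finset V} {L U U' : V → Finset C} {h m u : ℝ} {d r : ℕ}
  {f g : ι → C} {F F' : ι → Finset V} {x : ι}

/-- The elements of the window `W x` whose list `L` contains the colour `c`. -/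
def carriers (W : ι → Finset V) (L : V → Finset C) (x : ι) (c : C) : Finset V :=
  {v ∈ W x | c ∈ L v}

lemma sum_card_carriers_le [Fintype C] (hW : #(W x) ≤ d) (hu : 0 ≤ u) (hU : ∀ v, #(U v) ≤ u) :
    ∑ c, (#(carriers W U x c) : ℝ) ≤ d * u := by
  have hswap := sum_card_bipartiteAbove_eq_sum_card_bipartiteBelow (s := W x) (t := univ)
    fun v c => c ∈ U v
  simp only [bipartiteAbove, bipartiteBelow, filter_univ_mem] at hswap
  calc ∑ c, (#(carriers W U x c) : ℝ) = ∑ v ∈ W x, (#(U v) : ℝ) := mod_cast hswap.symm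
    _ ≤ #(W x) * u := by
        rw [← nsmul_eq_mul]
        exact sum_le_card_nsmul _ _ _ fun v _ => hU v
    _ ≤ d * u := by gcongr

/-- `f` and `F` extend a partial colouring to the indices in `X`: each `x ∈ X` receives the colour
`f x` and at least `h` vertices `F x` of its window which have `f x` on their list `L` but not among
their used colours `U`, and no vertex is given two indices of the same colour. -/
structure IsExtension (X : Finset ι) (W : ι → Finset V) (L U : V → Finset C) (h : ℝ) (f : ι → C)
    (F : ι → Finset V) : Prop where
  subset_carriers : ∀ x ∈ X, F x ⊆ carriers W L x (f x)
  le_card : ∀ x ∈ X, h ≤ #(F x)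
  notMem_used : ∀ x ∈ X, ∀ v ∈ F x, f x ∉ U v
  disjoint : ∀ x ∈ X, ∀ y ∈ X, x ≠ y → f x = f y → Disjoint (F x) (F y)

lemma IsExtension.piecewise [DecidableEq ι] (hA : IsExtension A W L U h f F)
    (hB : IsExtension B W L U' h g F') (hUU' : ∀ v, U v ⊆ U' v)
    (hU' : ∀ x ∈ A, ∀ v ∈ F x, f x ∈ U' v) :
    IsExtension (A ∪ B) W L U h (A.piecewise f g) (A.piecewise F F') := by
  have hcross : ∀ x ∈ A, ∀ y ∈ B, f x = g y → Disjoint (F x) (F' y) := fun x hx y hy hxy =>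
    disjoint_left.mpr fun v hvx hvy => hB.notMem_used y hy v hvy (hxy ▸ hU' x hx v hvx)
  constructor
  · intro x hx
    by_cases hxA : x ∈ A
    · simpa [hxA] using hA.subset_carriers x hxA
    · simpa [hxA] using hB.subset_carriers x ((mem_union.mp hx).resolve_left hxA)
  · intro x hx
    by_cases hxA : x ∈ A
    · simpa [hxA] using hA.le_card x hxA
    · simpa [hxA] using hB.le_card x ((mem_union.mp hx).resolve_left hxA)
  · intro x hx
    by_cases hxA : x ∈ A
    · simpa [hxA] using hA.notMem_used x hxA
    · simpa [hxA] using fun v hv hxU =>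
        hB.notMem_used x ((mem_union.mp hx).resolve_left hxA) v hv (hUU' v hxU)
  · intro x hx y hy hne
    by_cases hxA : x ∈ A <;> by_cases hyA : y ∈ A
    · simpa [hxA, hyA] using hA.disjoint x hxA y hyA hne
    · simpa [hxA, hyA] using hcross x hxA y ((mem_union.mp hy).resolve_left hyA)
    · simpa [hxA, hyA, eq_comm, disjoint_comm] using
        hcross y hyA x ((mem_union.mp hx).resolve_left hxA)
    · simpa [hxA, hyA] using hB.disjoint x ((mem_union.mp hx).resolve_left hxA) y
        ((mem_union.mp hy).resolve_left hyA) hne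

lemma exists_card_carriers_le [Fintype C] [Nonempty C] {b : ℝ} (hW : #(W x) ≤ d) (hu : 0 ≤ u)
    (hU : ∀ v, #(U v) ≤ u) (hb : d * u ≤ Fintype.card C * b) : ∃ c, #(carriers W U x c) ≤ b := by
  by_contra! hlt
  have : ∑ _c : C, b < ∑ c, (#(carriers W U x c) : ℝ) :=
    sum_lt_sum_of_nonempty univ_nonempty fun c _ => hlt c
  rw [sum_const, card_univ, nsmul_eq_mul] at this
  linarith [sum_card_carriers_le hW hu hU]

lemma card_carriers_le_add (x : ι) (c : C) :
    #(carriers W L x c) ≤ #{v ∈ carriers W L x c | c ∉ U v} + #(carriers W U x c) := by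
  rw [← card_filter_add_card_filter_not (s := carriers W L x c) fun v => c ∉ U v]
  gcongr
  intro v hv
  simp only [carriers, mem_filter, not_not] at hv ⊢
  exact ⟨hv.1.1, hv.2⟩

/-- The colours already used at a quarter of the vertices of the window of `x` carrying them. -/
def heavy [Fintype C] (W : ι → Finset V) (L U : V → Finset C) (x : ι) : Finset C :=
  {c | #(carriers W L x c) ≤ 4 * #(carriers W U x c)}

lemma card_heavy_div_card_le [Fintype C] [Nonempty C] (hm₀ : 0 < m)
    (hm : ∀ c, m ≤ #(carriers W L x c)) (hW : #(W x) ≤ d) (hu : 0 ≤ u) (hU : ∀ v, #(U v) ≤ u)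
    (hdu : 4 * d * u ≤ m * Fintype.card C / 64) :
    (#(heavy W L U x) / Fintype.card C : ℝ) ≤ 1 / 64 := by
  have hheavy : #(heavy W L U x) * (m / 4) ≤ d * u :=
    calc #(heavy W L U x) * (m / 4) ≤ ∑ c ∈ heavy W L U x, (#(carriers W U x c) : ℝ) := by
          rw [← nsmul_eq_mul]
          refine card_nsmul_le_sum _ _ _ fun c hc => ?_
          have : (#(carriers W L x c) : ℝ) ≤ 4 * #(carriers W U x c) := by
            exact_mod_cast (mem_filter_univ c).mp hc
          linarith [hm c]
      _ ≤ ∑ c, (#(carriers W U x c) : ℝ) :=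
          sum_le_sum_of_subset_of_nonneg (subset_univ _) fun _ _ _ => by positivity
      _ ≤ d * u := sum_card_carriers_le hW hu hU
  rw [div_le_iff₀ (by exact_mod_cast Fintype.card_pos)]
  refine le_of_mul_le_mul_right ?_ hm₀
  linarith

lemma isExtension_singleton (hm : m ≤ #(carriers W L x (f x)))
    (hc : #(carriers W U x (f x)) ≤ m / 2) :
    IsExtension {x} W L U (m / 2) f fun y => {v ∈ carriers W L y (f y) | f y ∉ U v} where
  subset_carriers _ _ := filter_subset _ _
  le_card y hy := by
    obtain rfl := mem_singleton.mp hy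
    have hcard := card_carriers_le_add (W := W) (L := L) (U := U) y (f y)
    rify at hcard
    linarith
  notMem_used _ _ v hv := (mem_filter.mp hv).2
  disjoint y hy z hz hne := absurd ((mem_singleton.mp hy).trans (mem_singleton.mp hz).symm) hne

variable [DecidableEq V]

/-- The indices in `X` whose window contains `v`. -/
def incident (X : Finset ι) (W : ι → Finset V) (v : V) : Finset ι :=
  {x ∈ X | v ∈ W x}

/-- The used colours after the index `x` has received the colour `c`. -/
def markUsed (W : ι → Finset V) (U : V → Finset C) (x : ι) (c : C) (v : V) : Finset C :=
  if v ∈ W x then insert c (U v) else U v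

lemma card_markUsed_add_card_incident_le [DecidableEq ι] (hx : x ∉ X) (c : C) (v : V) :
    #(markUsed W U x c v) + #(incident X W v) ≤ #(U v) + #(incident (insert x X) W v) := by
  have hx' : x ∉ incident X W v := fun h => hx (mem_filter.mp h).1
  by_cases hv : v ∈ W x
  · have hincident : incident (insert x X) W v = insert x (incident X W v) := by
      rw [incident, filter_insert, if_pos hv, incident]
    have := card_insert_le c (U v)
    rw [hincident, card_insert_of_notMem hx', markUsed, if_pos hv]
    omega
  · rw [incident, incident, filter_insert, if_neg hv, markUsed, if_neg hv]

theorem exists_isExtension_of_card_add_card_incident_le [Fintype C] [Nonempty C]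
    (hu : 0 ≤ u) (hdu : d * u ≤ Fintype.card C * (m / 2)) (hW : ∀ x ∈ X, #(W x) ≤ d)
    (hm : ∀ x ∈ X, ∀ c, m ≤ #(carriers W L x c)) (hU : ∀ v, (#(U v) + #(incident X W v) : ℝ) ≤ u) :
    ∃ f F, IsExtension X W L U (m / 2) f F := by
  classical
  induction X using Finset.induction_on generalizing U with
  | empty => exact ⟨fun _ => Classical.arbitrary C, fun _ => ∅, by constructor <;> simp⟩
  | insert x X hx ih =>
    obtain ⟨c, hc⟩ := exists_card_carriers_le (hW x (mem_insert_self x X)) hu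
      (fun v => (le_add_of_nonneg_right (Nat.cast_nonneg _)).trans (hU v)) hdu
    obtain ⟨g, F', hX⟩ := ih (U := markUsed W U x c) (fun y hy => hW y (mem_insert_of_mem hy))
      (fun y hy => hm y (mem_insert_of_mem hy)) fun v =>
        (hU v).trans' (mod_cast card_markUsed_add_card_incident_le hx c v)
    have hx₁ := isExtension_singleton (f := fun _ => c) (hm x (mem_insert_self x X) c) hc
    refine ⟨_, _, hx₁.piecewise hX (fun v => ?_) fun y hy v hv => ?_⟩
    · rw [markUsed]
      split_ifs
      exacts [subset_insert _ _, subset_rfl]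
    · obtain rfl := mem_singleton.mp hy
      rw [markUsed, if_pos (mem_filter.mp (mem_filter.mp hv).1).1]
      exact mem_insert_self _ _

end Extension

section Resampling

variable {V C ι : Type*} [DecidableEq V] [DecidableEq C] [DecidableEq ι]
  {X : Finset ι} {W : ι → Finset V} {L U : V → Finset C} {m u : ℝ} {d r T : ℕ} {f g : ι → C}
  {x : ι} {v : V}

/-- The vertices of the window of `x` that can be given to `x` under the tentative colouring `f`
of `X`: the colour `f x` is on their list, not used, and unique among the indices seen by them. -/
def kept (X : Finset ι) (W : ι → Finset V) (L U : V → Finset C) (f : ι → C) (x : ι) : Finset V :=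
  {v ∈ carriers W L x (f x) | f x ∉ U v} \
    repeated (incident X W) (carriers W L x (f x)) f x

/-- The indices keeping less than half of the vertices that carry their tentative colour; these are
coloured again in the next round. -/
def failing (X : Finset ι) (W : ι → Finset V) (L U : V → Finset C) (f : ι → C) : Finset ι :=
  {x ∈ X | 2 * #(kept X W L U f x) < #(carriers W L x (f x))}

/-- The colours occurring at indices around `v` and belonging to the list of `v`. -/
def newlyUsed (X : Finset ι) (W : ι → Finset V) (L : V → Finset C) (f : ι → C) (v : V) : Finset C :=
  {x ∈ incident X W v | f x ∈ L v}.image f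

lemma isExtension_kept (hm : ∀ x ∈ X, ∀ c, m ≤ #(carriers W L x c)) :
    IsExtension (X \ failing X W L U f) W L U (m / 2) f (kept X W L U f) where
  subset_carriers _ _ := sdiff_subset.trans (filter_subset _ _)
  le_card x hx := by
    obtain ⟨hxX, hx⟩ := mem_sdiff.mp hx
    have hkept : #(carriers W L x (f x)) ≤ 2 * #(kept X W L U f x) :=
      not_lt.mp fun hlt => hx (mem_filter.mpr ⟨hxX, hlt⟩)
    have : (#(carriers W L x (f x)) : ℝ) ≤ 2 * #(kept X W L U f x) := mod_cast hkept
    linarith [hm x hxX (f x)]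
  notMem_used _ _ v hv := (mem_filter.mp (mem_sdiff.mp hv).1).2
  disjoint x _ y hy hne hxy := disjoint_left.mpr fun v hvx hvy => by
    obtain ⟨hvx, hrep⟩ := mem_sdiff.mp hvx
    have hvW := (mem_filter.mp (mem_filter.mp (mem_sdiff.mp hvy).1).1).1
    exact hrep (mem_filter.mpr ⟨(mem_filter.mp hvx).1, y,
      mem_filter.mpr ⟨(mem_sdiff.mp hy).1, hvW⟩, hne.symm, hxy.symm⟩)

lemma exists_isExtension_of_failing (hm : ∀ x ∈ X, ∀ c, m ≤ #(carriers W L x c))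
    (h : ∃ g F, IsExtension (failing X W L U f) W L (fun v => U v ∪ newlyUsed X W L f v)
      (m / 2) g F) : ∃ g F, IsExtension X W L U (m / 2) g F := by
  obtain ⟨g, F, hg⟩ := h
  have hglue := (isExtension_kept (f := f) hm).piecewise hg (fun _ => subset_union_left)
    fun x hx v hv => ?_
  · have hsub : failing X W L U f ⊆ X := filter_subset _ _
    rw [sdiff_union_of_subset hsub] at hglue
    exact ⟨_, _, hglue⟩
  · obtain ⟨hvW, hvL⟩ := mem_filter.mp (mem_filter.mp (mem_sdiff.mp hv).1).1
    exact mem_union_right _ (mem_image_of_mem f (mem_filter.mpr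
      ⟨mem_filter.mpr ⟨(mem_sdiff.mp hx).1, hvW⟩, hvL⟩))

lemma mem_heavy_or_le_card_repeated_of_mem_failing [Fintype C] (hx : x ∈ failing X W L U f) :
    f x ∈ heavy W L U x ∨ (carriers W L x (f x)).Nonempty ∧
      (1 / 4 : ℝ) * #(carriers W L x (f x)) ≤
        #(repeated (incident X W) (carriers W L x (f x)) f x) := by
  obtain ⟨-, hlt⟩ := mem_filter.mp hx
  refine or_iff_not_imp_left.mpr fun hheavy => ⟨card_pos.mp (by omega), ?_⟩
  have hlight : 4 * #(carriers W U x (f x)) < #(carriers W L x (f x)) := by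
    simpa [heavy] using hheavy
  have hused := card_carriers_le_add (W := W) (L := L) (U := U) x (f x)
  have hsdiff := le_card_sdiff (repeated (incident X W) (carriers W L x (f x)) f x)
    {v ∈ carriers W L x (f x) | f x ∉ U v}
  have hquarter : #(carriers W L x (f x)) ≤
      4 * #(repeated (incident X W) (carriers W L x (f x)) f x) := by
    rw [kept] at hlt
    omega
  rify at hquarter
  linarith

lemma kept_congr (hx : f x = g x)
    (h : ∀ w ∈ W x, ∀ y ∈ incident X W w, f y = g y) :
    kept X W L U f x = kept X W L U g x := by
  have hrep : repeated (incident X W) (carriers W L x (f x)) f x =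
      repeated (incident X W) (carriers W L x (f x)) g x :=
    repeated_congr hx fun w hw => h w (mem_filter.mp hw).1
  rw [kept, kept, hrep, hx]

lemma incident_failing_congr (hv : ∀ x ∈ incident X W v, f x = g x)
    (h : ∀ x ∈ incident X W v, ∀ w ∈ W x, ∀ y ∈ incident X W w, f y = g y) :
    incident (failing X W L U f) W v = incident (failing X W L U g) W v := by
  ext x
  simp only [incident, failing, mem_filter]
  refine and_congr_left fun hxv => and_congr_right fun hxX => ?_
  have hx : x ∈ incident X W v := mem_filter.mpr ⟨hxX, hxv⟩
  rw [kept_congr (hv x hx) (h x hx), hv x hx]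

variable [Fintype C]

lemma exists_repeats_of_lt_card_incident_failing
    (hv : r / 2 < #(incident (failing X W L U f) W v)) :
    (r / 8 ≤ (#{x ∈ incident X W v | f x ∈ heavy W L U x} : ℝ) ∨
      ∃ K ⊆ incident X W v, (r / 8 : ℝ) ≤ #K ∧ ∀ x ∈ K, ∃ y ∈ incident X W v \ K, f y = f x) ∨
    ∃ K ⊆ incident X W v, (r / 8 : ℝ) ≤ #K ∧ Set.InjOn f K ∧ ∀ x ∈ K, f x ∈ (univ : Finset C) ∧
      (carriers W L x (f x)).Nonempty ∧ (1 / 4 : ℝ) * #(carriers W L x (f x)) ≤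
        #(repeated (incident X W) (carriers W L x (f x)) f x) := by
  rw [or_assoc, or_iff_not_imp_left, not_le]
  intro hheavy
  let B : Finset ι := {x ∈ incident (failing X W L U f) W v | f x ∉ heavy W L U x}
  have hfail : incident (failing X W L U f) W v ⊆ incident X W v :=
    filter_subset_filter _ (filter_subset _ _)
  have hB : B ⊆ incident X W v := (filter_subset _ _).trans hfail
  have hcard : 2 * (r / 8 : ℝ) ≤ #B := by
    have hsplit := card_filter_add_card_filter_not (s := incident (failing X W L U f) W v)
      fun x => f x ∈ heavy W L U x
    have hle := card_le_card (filter_subset_filter (fun x => f x ∈ heavy W L U x) hfail)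
    have hv' : r < 2 * #(incident (failing X W L U f) W v) := by omega
    rify at hsplit hle hv'
    linarith
  rcases exists_injOn_or_forall_exists_eq B f hcard with ⟨K, hKB, hK, hinj⟩ | ⟨K, hKB, hK, hrep⟩
  · refine .inr ⟨K, hKB.trans hB, hK, hinj, fun x hx => ⟨mem_univ _, ?_⟩⟩
    obtain ⟨hx, hlight⟩ := mem_filter.mp (hKB hx)
    exact (mem_heavy_or_le_card_repeated_of_mem_failing (mem_filter.mp hx).1).resolve_left hlight
  · refine .inl ⟨K, hKB.trans hB, hK, fun x hx => ?_⟩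
    obtain ⟨y, hy, hyx⟩ := hrep x hx
    exact ⟨y, sdiff_subset_sdiff hB subset_rfl hy, hyx⟩

variable [Fintype ι] [Nonempty C]

lemma prob_lt_card_incident_failing_le (hm₀ : 0 < m)
    (hm : ∀ x ∈ X, ∀ c, m ≤ #(carriers W L x c)) (hW : ∀ x, #(W x) ≤ d) (hu : 0 ≤ u)
    (hU : ∀ v, #(U v) ≤ u) (hdu : 4 * d * u ≤ m * Fintype.card C / 64)
    (hX : ∀ v, #(incident X W v) ≤ r) (hr : 256 * r ≤ Fintype.card C) (hT : 8 * T ≤ r) (v : V) :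
    prob (fun f : ι → C => r / 2 < #(incident (failing X W L U f) W v)) ≤ 3 * (2 / 3) ^ T := by
  have hN : (0 : ℝ) < Fintype.card C := mod_cast Fintype.card_pos
  have hT' : (T : ℝ) ≤ r / 8 := by
    have : (8 * T : ℝ) ≤ r := mod_cast hT
    linarith
  have hr' : (256 * r : ℝ) ≤ Fintype.card C := mod_cast hr
  have hX' : (#(incident X W v) : ℝ) ≤ r := mod_cast hX v
  have hrN : (r / Fintype.card C : ℝ) ≤ 1 / 256 := by
    rw [div_le_iff₀ hN]
    linarith
  have hheavy := prob_le_card_filter_mem (P := incident X W v) (A := heavy W L U) (T := T)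
    (fun x hx => card_heavy_div_card_le hm₀ (hm x (mem_filter.mp hx).1) (hW x) hu hU hdu)
    (by norm_num) (by linarith : (1 / 64 * #(incident X W v) : ℝ) ≤ r / 8 / 4) hT'
  have hqrep : (#(incident X W v) / Fintype.card C * #(incident X W v) : ℝ) ≤ r / 8 / 4 :=
    calc _ ≤ (r / Fintype.card C * r : ℝ) := by gcongr
      _ ≤ 1 / 256 * r := by gcongr
      _ ≤ r / 8 / 4 := by linarith
  have hqinj : (#(univ : Finset C) * r / (1 / 4 * Fintype.card C ^ 2) * #(incident X W v) : ℝ) ≤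
      r / 8 / 4 :=
    calc _ = 4 * (r / Fintype.card C : ℝ) * #(incident X W v) := by
          rw [card_univ]
          field_simp
      _ ≤ 4 * (1 / 256) * r := by gcongr
      _ ≤ r / 8 / 4 := by linarith
  have hrep := prob_exists_forall_exists_eq_le hqrep hT'
  have hinj := prob_exists_injOn_le_card_repeated_le hX (by norm_num) univ (carriers W L) hqinj hT'
  calc _ ≤ _ := prob_le_add_of_imp_or fun _ => exists_repeats_of_lt_card_incident_failing
    _ ≤ (2 / 3) ^ T + (2 / 3) ^ T + (2 / 3) ^ T :=
        add_le_add ((prob_le_add_of_imp_or fun _ => id).trans (add_le_add hheavy hrep)) hinj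
    _ = 3 * (2 / 3) ^ T := by ring

end Resampling

section RandomRound

variable {V C : Type*} [Fintype V] [DecidableEq V] [DecidableEq C]
  {G : SimpleGraph V} [DecidableRel G.Adj] {X : Finset V} {W : V → Finset V} {L U : V → Finset C}
  {d r T : ℕ} {m u b t : ℝ}

lemma dependsOn_card_incident (hWG : ∀ x, W x ⊆ G.neighborFinset x) (v : V) :
    DependsOn (fun f : V → C => t ≤ #{x ∈ incident X W v | f x ∈ L v} ∨
      r / 2 < #(incident (failing X W L U f) W v)) (walkBall G 3 v) := by
  intro f g hfg
  have hadj {v x : V} (hx : x ∈ incident X W v) : G.Adj v x :=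
    ((G.mem_neighborFinset x v).mp (hWG x (mem_filter.mp hx).2)).symm
  have hv : ∀ x ∈ incident X W v, f x = g x := fun x hx =>
    hfg x (mem_walkBall_succ_of_adj (hadj hx) (self_mem_walkBall 2 x))
  have hfar : ∀ x ∈ incident X W v, ∀ w ∈ W x, ∀ y ∈ incident X W w, f y = g y :=
    fun x hx w hw y hy => hfg y <| mem_walkBall_succ_of_adj (hadj hx) <|
      mem_walkBall_succ_of_adj ((G.mem_neighborFinset x w).mp (hWG x hw)) <|
        mem_walkBall_succ_of_adj (hadj hy) (self_mem_walkBall 0 y)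
  beta_reduce
  rw [filter_congr fun x hx => by rw [hv x hx], incident_failing_congr hv hfar]

lemma exists_forall_card_incident_failing_le [Fintype C] [Nonempty C] (hd : ∀ v, G.degree v ≤ d)
    (hWG : ∀ x, W x ⊆ G.neighborFinset x) (hm₀ : 0 < m)
    (hm : ∀ x ∈ X, ∀ c, m ≤ #(carriers W L x c)) (hu : 0 ≤ u) (hU : ∀ v, #(U v) ≤ u)
    (hdu : 4 * d * u ≤ m * Fintype.card C / 64) (hX : ∀ v, #(incident X W v) ≤ r)
    (hb : 0 ≤ b) (hL : ∀ v, #(L v) ≤ b) (hbt : b / Fintype.card C * r ≤ t / 4)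
    (hr : 256 * r ≤ Fintype.card C) (hTr : 8 * T ≤ r) (hTt : T ≤ t)
    (hT : (2 / 3 : ℝ) ^ T ≤ 1 / (16 * (d + 1) ^ 6)) :
    ∃ f : V → C, ∀ v, #{x ∈ incident X W v | f x ∈ L v} < t ∧
      #(incident (failing X W L U f) W v) ≤ r / 2 := by
  have hW : ∀ x, #(W x) ≤ d := fun x => (card_le_card (hWG x)).trans (hd x)
  suffices ∃ f : V → C, ∀ v, ¬ (t ≤ #{x ∈ incident X W v | f x ∈ L v} ∨
      r / 2 < #(incident (failing X W L U f) W v)) by simpa only [not_or, not_le, not_lt] using this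
  refine exists_forall_not_of_dependsOn_walkBall hd (dependsOn_card_incident hWG) fun v => ?_
  have hlist : prob (fun f : V → C => t ≤ #{x ∈ incident X W v | f x ∈ L v}) ≤ (2 / 3) ^ T := by
    refine prob_le_card_filter_mem (A := fun _ => L v) (q := b / Fintype.card C)
      (fun _ _ => by gcongr; exact hL v) (by positivity) (hbt.trans' ?_) hTt
    gcongr
    exact hX v
  calc _ ≤ (2 / 3) ^ T + 3 * (2 / 3) ^ T :=
        (prob_le_add_of_imp_or fun _ => id).trans (add_le_add hlist
          (prob_lt_card_incident_failing_le hm₀ hm hW hu hU hdu hX hr hTr v))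
    _ ≤ 4 * (1 / (16 * (d + 1) ^ 6)) := by linarith
    _ = 1 / (4 * (d + 1) ^ (2 * 3)) := by
        field_simp
        norm_num

end RandomRound

section Parameters

/-- The numerical conditions under which the colouring argument works for a `d`-regular graph, a
list graph with `α * d` vertices, minimum degree `δ` and maximum degree at most `β * δ`. Each bad
event has probability a small multiple of `(2 / 3) ^ T`. -/
structure Admissible (α β δ : ℝ) (d T : ℕ) : Prop where
  le_alpha : 256 ≤ α
  beta_nonneg : 0 ≤ β
  mul_beta_le : 24 * 2 ^ 13 * β ≤ α
  d_pos : 0 < d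
  T_pos : 1 ≤ T
  T_le : T ≤ δ / (16 * α)
  T_le_of_two_pow_le : ∀ i : ℕ, 2 ^ i ≤ d → T ≤ δ / 2 ^ 13 / ((i + 2) * (i + 3))
  pow_le : (2 / 3 : ℝ) ^ T ≤ 1 / (16 * (d + 1) ^ 6 * (α * d))

variable {α β δ : ℝ} {d T : ℕ}

lemma Admissible.alpha_pos (h : Admissible α β δ d T) : 0 < α := by
  linarith [h.le_alpha]

lemma Admissible.delta_pos (h : Admissible α β δ d T) : 0 < δ := by
  have hT : (1 : ℝ) ≤ T := mod_cast h.T_pos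
  have hα := h.alpha_pos
  have := hT.trans h.T_le
  rw [le_div_iff₀ (by positivity)] at this
  linarith

lemma Admissible.pow_le' (h : Admissible α β δ d T) :
    (2 / 3 : ℝ) ^ T ≤ 1 / (16 * (d + 1) ^ 6) := by
  have hd : (1 : ℝ) ≤ d := mod_cast h.d_pos
  have hαd : 1 ≤ α * d := one_le_mul_of_one_le_of_one_le (by linarith [h.le_alpha]) hd
  exact h.pow_le.trans (one_div_le_one_div_of_le (by positivity)
    (le_mul_of_one_le_right (by positivity) hαd))

end Parameters

section IteratedResampling

variable {V C : Type*} [Fintype V] [DecidableEq V] [Fintype C] [DecidableEq C] [Nonempty C]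
  {G : SimpleGraph V} [DecidableRel G.Adj] {X : Finset V} {W : V → Finset V} {L U : V → Finset C}
  {α β δ : ℝ} {d r T i : ℕ}

lemma add_two_mul_add_three_le (i : ℕ) : (i + 2) * (i + 3) ≤ 6 * 2 ^ i := by
  induction i with
  | zero => norm_num
  | succ i ih =>
    rw [pow_succ]
    nlinarith

/-- The number of colours that may be used up around a vertex before the `i`-th round. -/
noncomputable def usedBudget (δ : ℝ) (i : ℕ) : ℝ :=
  δ / 2 ^ 13 * (1 - 1 / (i + 2))

lemma usedBudget_succ (δ : ℝ) (i : ℕ) :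
    usedBudget δ (i + 1) = usedBudget δ i + δ / 2 ^ 13 / ((i + 2) * (i + 3)) := by
  have : (i + 2 : ℝ) ≠ 0 := by positivity
  have : (i + 3 : ℝ) ≠ 0 := by positivity
  rw [usedBudget, usedBudget]
  push_cast
  rw [show (i + 1 + 2 : ℝ) = i + 3 by ring]
  field_simp
  ring

lemma usedBudget_le (hδ : 0 ≤ δ) (i : ℕ) : usedBudget δ i ≤ δ / 2 ^ 13 :=
  mul_le_of_le_one_right (by positivity) (sub_le_self _ (by positivity))

lemma Admissible.mul_div_mul_le_of_mul_two_pow_le (h : Admissible α β δ d T)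
    (hri : r * 2 ^ i ≤ d) :
    β * δ / (α * d) * r ≤ δ / 2 ^ 13 / ((i + 2) * (i + 3)) / 4 := by
  have hα := h.alpha_pos
  have hβ := h.beta_nonneg
  have hδ := h.delta_pos
  have hd₀ : (0 : ℝ) < d := mod_cast h.d_pos
  have hri' : (r * 2 ^ i : ℝ) ≤ d := mod_cast hri
  have hquad : ((i + 2) * (i + 3) : ℝ) ≤ 6 * 2 ^ i := mod_cast add_two_mul_add_three_le i
  rw [div_mul_eq_mul_div, div_div, div_div, div_le_div_iff₀ (by positivity) (by positivity)]
  calc β * δ * r * (2 ^ 13 * ((i + 2) * (i + 3) * 4))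
      ≤ β * δ * r * (2 ^ 13 * (6 * 2 ^ i * 4)) := by gcongr
    _ = 24 * 2 ^ 13 * β * δ * (r * 2 ^ i) := by ring
    _ ≤ α * δ * d := by
        gcongr
        exact h.mul_beta_le
    _ = δ * (α * d) := by ring

lemma Admissible.exists_round (h : Admissible α β δ d T) (hN : Fintype.card C = α * d)
    (hd : ∀ v, G.degree v ≤ d) (hWG : ∀ x, W x ⊆ G.neighborFinset x) (hL : ∀ v, #(L v) ≤ β * δ)
    (hm : ∀ x ∈ X, ∀ c, δ / (2 * α) ≤ #(carriers W L x c)) (hU : ∀ v, #(U v) ≤ usedBudget δ i)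
    (hX : ∀ v, #(incident X W v) ≤ r) (hri : r * 2 ^ i ≤ d) (hδr : δ / 8 < r) :
    ∃ f : V → C, (∀ v, #(U v ∪ newlyUsed X W L f v) ≤ usedBudget δ (i + 1)) ∧
      ∀ v, #(incident (failing X W L U f) W v) ≤ r / 2 := by
  have hα := h.alpha_pos
  have hδ := h.delta_pos
  have hβ := h.beta_nonneg
  have hd₀ : (0 : ℝ) < d := mod_cast h.d_pos
  have hr : 0 < r := by exact_mod_cast (by linarith : (0 : ℝ) < r)
  have hrd : (r : ℝ) ≤ d := mod_cast (Nat.le_mul_of_pos_right r (by positivity)).trans hri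
  have hcoll : β * δ / Fintype.card C * r ≤ δ / 2 ^ 13 / ((i + 2) * (i + 3)) / 4 :=
    hN ▸ h.mul_div_mul_le_of_mul_two_pow_le hri
  have hheavy : 4 * d * (δ / 2 ^ 13) ≤ δ / (2 * α) * Fintype.card C / 64 := by
    rw [hN]
    field_simp
    norm_num
  have hrN : (256 * r : ℝ) ≤ Fintype.card C := by
    rw [hN]
    gcongr
    exact h.le_alpha
  have hTr : (8 * T : ℝ) ≤ r := by
    have := h.T_le_of_two_pow_le 0 h.d_pos
    norm_num at this
    linarith
  obtain ⟨f, hf⟩ := exists_forall_card_incident_failing_le hd hWG (by positivity) hm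
    (by positivity) (fun v => (hU v).trans (usedBudget_le hδ.le i)) hheavy hX (by positivity) hL
    hcoll (mod_cast hrN) (mod_cast hTr)
    (h.T_le_of_two_pow_le i ((Nat.le_mul_of_pos_left _ hr).trans hri)) h.pow_le'
  refine ⟨f, fun v => ?_, fun v => (hf v).2⟩
  have hcard : #(U v ∪ newlyUsed X W L f v) ≤ #(U v) + #{x ∈ incident X W v | f x ∈ L v} :=
    (card_union_le _ _).trans (Nat.add_le_add_left card_image_le _)
  rify at hcard
  linarith [usedBudget_succ δ i, (hf v).1, hU v]

theorem Admissible.exists_isExtension (h : Admissible α β δ d T) (hN : Fintype.card C = α * d)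
    (hd : ∀ v, G.degree v ≤ d) (hWG : ∀ x, W x ⊆ G.neighborFinset x) (hL : ∀ v, #(L v) ≤ β * δ)
    (hm : ∀ x ∈ X, ∀ c, δ / (2 * α) ≤ #(carriers W L x c)) (hU : ∀ v, #(U v) ≤ usedBudget δ i)
    (hX : ∀ v, #(incident X W v) ≤ r) (hri : r * 2 ^ i ≤ d) :
    ∃ f F, IsExtension X W L U (δ / (2 * α) / 2) f F := by
  induction r using Nat.strong_induction_on generalizing i X U with
  | _ r ih =>
  have hα := h.alpha_pos
  have hδ := h.delta_pos
  rcases le_or_gt (r : ℝ) (δ / 8) with hr | hr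
  · have hW : ∀ x ∈ X, #(W x) ≤ d := fun x _ => (card_le_card (hWG x)).trans (hd x)
    refine exists_isExtension_of_card_add_card_incident_le (u := δ / 4) (by positivity) ?_ hW hm
      fun v => ?_
    · rw [hN]
      field_simp
      norm_num
    · have : (#(incident X W v) : ℝ) ≤ r := mod_cast hX v
      have := (hU v).trans (usedBudget_le hδ.le i)
      norm_num at this
      linarith
  · obtain ⟨f, hused, hfail⟩ := h.exists_round hN hd hWG hL hm hU hX hri hr
    have hr₀ : 0 < r := by exact_mod_cast (by linarith : (0 : ℝ) < r)
    refine exists_isExtension_of_failing hm (ih (r / 2) (by omega)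
      (fun x hx => hm x (mem_filter.mp hx).1) hused hfail ?_)
    calc r / 2 * 2 ^ (i + 1) = r / 2 * 2 * 2 ^ i := by ring
      _ ≤ r * 2 ^ i := by
          gcongr
          exact Nat.div_mul_le_self r 2
      _ ≤ d := hri

end IteratedResampling

section CouponCollector

variable {V C : Type*} [Fintype V] [DecidableEq V] [Fintype C] [DecidableEq C] [Nonempty C]

lemma prob_card_inter_image_le (M : Finset V) (S : Finset C) (m : ℕ) :
    prob (fun f : V → C => #(S ∩ M.image f) ≤ m) ≤
      (1 + Real.exp (-(#M / Fintype.card C))) ^ #S / 2 ^ (#S - m) := by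
  have hN : (0 : ℝ) < Fintype.card C := mod_cast Fintype.card_pos
  refine prob_le_one_add_pow_div_two_pow (R := fun K f => ∀ u ∈ M, f u ∈ Kᶜ) (fun K _ => ?_)
    fun f hf => ⟨S \ M.image f, sdiff_subset, ?_, fun K hK u hu => ?_⟩
  · have hcompl : (#Kᶜ / Fintype.card C : ℝ) ≤ Real.exp (-(#K / Fintype.card C)) := by
      rw [card_compl, Nat.cast_sub (card_le_univ K), sub_div, div_self hN.ne']
      linarith [Real.add_one_le_exp (-(#K / Fintype.card C : ℝ))]
    calc prob (fun f : V → C => ∀ u ∈ M, f u ∈ Kᶜ)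
        ≤ Real.exp (-(#K / Fintype.card C)) ^ #M := prob_forall_mem_le fun _ _ => hcompl
      _ = Real.exp (-(#M / Fintype.card C)) ^ #K := by
        rw [← Real.exp_nat_mul, ← Real.exp_nat_mul]
        ring_nf
  · have := card_sdiff_add_card_inter S (M.image f)
    omega
  · exact mem_compl.mpr fun hc => (mem_sdiff.mp (hK hc)).2 (mem_image_of_mem f hu)

lemma one_add_exp_neg_div_two_le {α z : ℝ} (hα : 256 ≤ α) (hz : 7 / (8 * α) ≤ z) :
    (1 + Real.exp (-z)) / 2 ≤ Real.exp (-(0.43 / α)) := by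
  set w := 7 / (8 * α) with hw
  have hw₀ : 0 < w := by positivity
  have hw₁ : w ≤ 1 / 256 := by
    rw [hw, div_le_div_iff₀ (by positivity) (by positivity)]
    linarith
  have hexp : Real.exp (-z) ≤ 1 / (1 + w) := by
    rw [Real.exp_neg, ← one_div]
    exact one_div_le_one_div_of_le (by positivity) (by linarith [Real.add_one_le_exp z])
  have hinv : 1 / (1 + w) ≤ 1 - 2 * (0.43 / α) := by
    have : 0.43 / α = 0.43 * 8 / 7 * w := by
      rw [hw]
      field_simp
    rw [this, div_le_iff₀ (by positivity)]
    nlinarith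
  linarith [Real.add_one_le_exp (-(0.43 / α))]

lemma two_pow_le_exp {x : ℝ} {k : ℕ} (hk : k ≤ 9 / 16 * x) : (2 : ℝ) ^ k ≤ Real.exp (0.39 * x) := by
  calc (2 : ℝ) ^ k = Real.exp (k * Real.log 2) := by
        rw [Real.exp_nat_mul, Real.exp_log two_pos]
    _ ≤ Real.exp (0.39 * x) := by
        have : (0 : ℝ) ≤ k := k.cast_nonneg
        exact Real.exp_le_exp.mpr (by nlinarith [Real.log_two_lt_d9])

lemma exp_neg_le_two_thirds_pow {x : ℝ} {T : ℕ} (hT : T ≤ x / 16) :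
    Real.exp (-(0.04 * x)) ≤ (2 / 3) ^ T := by
  have hhalf : Real.exp (-(1 / 2)) ≤ 2 / 3 := by
    rw [Real.exp_neg, inv_le_comm₀ (Real.exp_pos _) (by norm_num)]
    linarith [Real.add_one_le_exp (1 / 2 : ℝ)]
  calc Real.exp (-(0.04 * x)) ≤ Real.exp (T * -(1 / 2)) := Real.exp_le_exp.mpr (by linarith)
    _ = Real.exp (-(1 / 2)) ^ T := Real.exp_nat_mul _ _
    _ ≤ (2 / 3) ^ T := by gcongr

lemma one_add_exp_pow_div_two_pow_le {α δ z : ℝ} {n T : ℕ} (hα : 256 ≤ α) (hδ : 0 ≤ δ)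
    (hz : 7 / (8 * α) ≤ z) (hn : δ ≤ n) (hT : T ≤ δ / (16 * α)) :
    (1 + Real.exp (-z)) ^ n / 2 ^ (n - ⌊9 * δ / (16 * α)⌋₊) ≤ (2 / 3) ^ T := by
  set k := ⌊9 * δ / (16 * α)⌋₊
  have hkx : (k : ℝ) ≤ 9 / 16 * (δ / α) :=
    (Nat.floor_le (by positivity)).trans_eq (by ring)
  have htwo : (1 : ℝ) / 2 ^ (n - k) ≤ 2 ^ k / 2 ^ n := by
    rw [div_le_div_iff₀ (by positivity) (by positivity), one_mul, ← pow_add]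
    exact pow_le_pow_right₀ one_le_two (by omega)
  have hhalf : ((1 + Real.exp (-z)) / 2) ^ n ≤ Real.exp (-(0.43 * (δ / α))) :=
    calc ((1 + Real.exp (-z)) / 2) ^ n ≤ Real.exp (-(0.43 / α)) ^ n := by
          gcongr
          exact one_add_exp_neg_div_two_le hα hz
      _ = Real.exp (-(0.43 / α * n)) := by
          rw [← Real.exp_nat_mul]
          ring_nf
      _ ≤ Real.exp (-(0.43 / α * δ)) := by gcongr
      _ = Real.exp (-(0.43 * (δ / α))) := by ring_nf
  calc (1 + Real.exp (-z)) ^ n / 2 ^ (n - k) = (1 + Real.exp (-z)) ^ n * (1 / 2 ^ (n - k)) := by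
        rw [mul_one_div]
    _ ≤ (1 + Real.exp (-z)) ^ n * (2 ^ k / 2 ^ n) := by gcongr
    _ = 2 ^ k * ((1 + Real.exp (-z)) / 2) ^ n := by
        rw [div_pow]
        ring
    _ ≤ Real.exp (0.39 * (δ / α)) * Real.exp (-(0.43 * (δ / α))) := by
        gcongr
        exact two_pow_le_exp hkx
    _ = Real.exp (-(0.04 * (δ / α))) := by
        rw [← Real.exp_add]
        ring_nf
    _ ≤ (2 / 3) ^ T := exp_neg_le_two_thirds_pow (hT.trans_eq (by ring))

end CouponCollector

section CoreColouring

variable {V C : Type*} [Fintype V] [DecidableEq V] [DecidableEq C]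
  {G : SimpleGraph V} [DecidableRel G.Adj] {χ χ' : V → C} {v : V} {S : Finset C}
  {α β δ : ℝ} {d T : ℕ}

variable (G) in
/-- The neighbours of `v` which see the colour of `v` at a second vertex. -/
def clashNbrs (χ : V → C) (v : V) : Finset V :=
  repeated (fun u => G.neighborFinset u) (G.neighborFinset v) χ v

variable (G) in
/-- The vertices more than an eighth of whose neighbours are clashing; they will be recoloured. -/
def exceptional (χ : V → C) : Finset V :=
  {v | G.degree v < 8 * #(clashNbrs G χ v)}

variable (G) in
/-- The neighbours of `v` that may be joined to `v`: all of them if `v` is recoloured, and otherwise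
those for which no other neighbour shares the colour of `v`. -/
def safeNbrs (χ : V → C) (v : V) : Finset V :=
  if v ∈ exceptional G χ then G.neighborFinset v else G.neighborFinset v \ clashNbrs G χ v

lemma mem_exceptional : v ∈ exceptional G χ ↔ G.degree v < 8 * #(clashNbrs G χ v) :=
  mem_filter_univ v

lemma clashNbrs_subset : clashNbrs G χ v ⊆ G.neighborFinset v :=
  repeated_subset

lemma safeNbrs_subset : safeNbrs G χ v ⊆ G.neighborFinset v := by
  unfold safeNbrs
  split_ifs
  · exact subset_rfl
  · exact sdiff_subset

lemma seven_mul_degree_le : 7 * G.degree v ≤ 8 * #(safeNbrs G χ v) := by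
  unfold safeNbrs
  split_ifs with hv
  · rw [card_neighborFinset_eq_degree]
    omega
  · have := card_sdiff_add_card_eq_card (clashNbrs_subset (G := G) (χ := χ) (v := v))
    rw [card_neighborFinset_eq_degree] at this
    rw [mem_exceptional] at hv
    omega

lemma clashNbrs_congr (hv : χ v = χ' v)
    (h : ∀ u ∈ G.neighborFinset v, ∀ w ∈ G.neighborFinset u, χ w = χ' w) :
    clashNbrs G χ v = clashNbrs G χ' v :=
  repeated_congr hv h

lemma safeNbrs_congr (h : clashNbrs G χ v = clashNbrs G χ' v) :
    safeNbrs G χ v = safeNbrs G χ' v := by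
  simp only [safeNbrs, mem_exceptional, h]

variable (G) in
/-- `χ` assigns the vertices adjacent to `v` the right number of colours from `S`: many at safe
neighbours, few at exceptional ones, and not too many altogether. -/
structure IsBalancedAt (α δ : ℝ) (χ : V → C) (S : Finset C) (v : V) : Prop where
  lt_card_safe : 9 * δ / (16 * α) < #(S ∩ (safeNbrs G χ v).image χ)
  card_exceptional_le : #(S ∩ (G.neighborFinset v ∩ exceptional G χ).image χ) ≤ δ / (16 * α)
  card_le : #{u ∈ G.neighborFinset v | χ u ∈ S} ≤ δ / 2 ^ 14

lemma isBalancedAt_iff : IsBalancedAt G α δ χ S v ↔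
    9 * δ / (16 * α) < #(S ∩ (safeNbrs G χ v).image χ) ∧
      #(S ∩ (G.neighborFinset v ∩ exceptional G χ).image χ) ≤ δ / (16 * α) ∧
        #{u ∈ G.neighborFinset v | χ u ∈ S} ≤ δ / 2 ^ 14 :=
  ⟨fun h => ⟨h.1, h.2, h.3⟩, fun h => ⟨h.1, h.2.1, h.2.2⟩⟩

lemma dependsOn_isBalancedAt (S : Finset C) (v : V) :
    DependsOn (fun χ => IsBalancedAt G α δ χ S v) (walkBall G 3 v) := by
  intro χ χ' h
  have hnbr : ∀ u ∈ G.neighborFinset v, χ u = χ' u := fun u hu =>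
    h u (mem_walkBall_succ_of_adj ((G.mem_neighborFinset v u).mp hu) (self_mem_walkBall 2 u))
  have hclash {x : V} (hx : ∀ u ∈ walkBall G 2 x, χ u = χ' u) :
      clashNbrs G χ x = clashNbrs G χ' x :=
    clashNbrs_congr (hx x (self_mem_walkBall 2 x)) fun u hu w hw => hx w <|
      mem_walkBall_succ_of_adj ((G.mem_neighborFinset x u).mp hu) <|
        mem_walkBall_succ_of_adj ((G.mem_neighborFinset u w).mp hw) (self_mem_walkBall 0 w)
  have hsafe : safeNbrs G χ v = safeNbrs G χ' v := safeNbrs_congr <|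
    clashNbrs_congr (h v (self_mem_walkBall 3 v)) fun u hu w hw => h w <|
      mem_walkBall_succ_of_adj ((G.mem_neighborFinset v u).mp hu) <|
        mem_walkBall_succ_of_adj ((G.mem_neighborFinset u w).mp hw) (self_mem_walkBall 1 w)
  have hexc : G.neighborFinset v ∩ exceptional G χ = G.neighborFinset v ∩ exceptional G χ' := by
    ext x
    simp only [mem_inter, mem_exceptional, and_congr_right_iff]
    intro hx
    rw [hclash fun u hu => h u
      (mem_walkBall_succ_of_adj ((G.mem_neighborFinset v x).mp hx) hu)]
  have himage {M : Finset V} (hM : M ⊆ G.neighborFinset v) : M.image χ = M.image χ' :=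
    image_congr fun u hu => hnbr u (hM hu)
  have hmem : {u ∈ G.neighborFinset v | χ u ∈ S} = {u ∈ G.neighborFinset v | χ' u ∈ S} :=
    filter_congr fun u hu => by rw [hnbr u hu]
  simp only [isBalancedAt_iff, hsafe, hexc, hmem, himage safeNbrs_subset, himage inter_subset_left]

variable [Fintype C] [Nonempty C]

-- No vertex at distance zero or two from `v` is a neighbour of `v`, so conditioning on the colours
-- outside the neighbourhood of `v` fixes `safeNbrs G χ v` and leaves its colours uniform.
lemma Admissible.prob_card_inter_image_safeNbrs_le (h : Admissible α β δ d T) (hG : G.CliqueFree 3)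
    (hN : Fintype.card C = α * d) (hd : G.degree v = d) (hS : δ ≤ #S) :
    prob (fun χ : V → C => #(S ∩ (safeNbrs G χ v).image χ) ≤ 9 * δ / (16 * α)) ≤ (2 / 3) ^ T := by
  have hα := h.alpha_pos
  have hδ := h.delta_pos
  have hd₀ : (0 : ℝ) < d := mod_cast h.d_pos
  have hind := isIndepSet_neighborSet_of_triangleFree G hG v
  refine prob_le_of_forall_prob_piecewise_le (G.neighborFinset v) fun g => ?_
  have hsafe (f : V → C) : safeNbrs G ((G.neighborFinset v).piecewise f g) v = safeNbrs G g v := by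
    refine safeNbrs_congr (clashNbrs_congr ?_ fun u hu w hw => ?_) <;>
      refine piecewise_eq_of_notMem _ _ _ ?_
    · simp
    · rw [mem_neighborFinset] at hu hw ⊢
      exact fun hvw => hind hu hvw hw.ne hw
  have himage (f : V → C) : (safeNbrs G g v).image ((G.neighborFinset v).piecewise f g) =
      (safeNbrs G g v).image f :=
    image_congr fun u hu => piecewise_eq_of_mem _ _ _ (safeNbrs_subset hu)
  simp only [hsafe, himage]
  refine (prob_mono fun f hf => Nat.le_floor hf).trans <|
    (prob_card_inter_image_le (safeNbrs G g v) S _).trans <|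
      one_add_exp_pow_div_two_pow_le h.le_alpha hδ.le ?_ hS h.T_le
  have hcard := seven_mul_degree_le (G := G) (χ := g) (v := v)
  rw [hd] at hcard
  rify at hcard
  rw [hN, div_le_div_iff₀ (by positivity) (by positivity)]
  nlinarith

lemma Admissible.prob_card_inter_image_exceptional_le (h : Admissible α β δ d T)
    (hN : Fintype.card C = α * d) (hd : ∀ v, G.degree v ≤ d) (hS : #S ≤ β * δ) (v : V) :
    prob (fun χ : V → C => δ / (16 * α) < #(S ∩ (G.neighborFinset v ∩ exceptional G χ).image χ)) ≤
      (2 / 3) ^ T := by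
  have hα := h.alpha_pos
  have hβ := h.beta_nonneg
  have hδ := h.delta_pos
  have hd₀ : (0 : ℝ) < d := mod_cast h.d_pos
  have hdv : (#(G.neighborFinset v) : ℝ) ≤ d := mod_cast hd v
  have hrate : (#S * d / (1 / 8 * Fintype.card C ^ 2) * #(G.neighborFinset v) : ℝ) ≤
      δ / (16 * α) / 4 :=
    calc (#S * d / (1 / 8 * Fintype.card C ^ 2) * #(G.neighborFinset v) : ℝ)
        ≤ β * δ * d / (1 / 8 * (α * d) ^ 2) * d := by
          rw [hN]
          gcongr
      _ = 8 * β / α * (δ / α) := by field_simp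
      _ ≤ 1 / 64 * (δ / α) := by
          refine mul_le_mul_of_nonneg_right ?_ (by positivity)
          rw [div_le_iff₀ hα]
          linarith [h.mul_beta_le]
      _ = δ / (16 * α) / 4 := by
          field_simp
          norm_num
  refine (prob_mono fun χ hχ => ?_).trans <|
    prob_exists_injOn_le_card_repeated_le hd (by norm_num : (0 : ℝ) < 1 / 8) S
      (fun x _ => G.neighborFinset x) hrate h.T_le
  obtain ⟨K, hK, hinj, himage⟩ := exists_subset_injOn_image_eq_of_surjOn (f := χ)
    (G.neighborFinset v ∩ exceptional G χ : Finset V)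
    (S ∩ (G.neighborFinset v ∩ exceptional G χ).image χ) fun c hc => by
      simpa using (mem_inter.mp (mem_coe.mp hc)).2
  have hK' : K ⊆ G.neighborFinset v ∩ exceptional G χ := mod_cast hK
  refine ⟨K, hK'.trans inter_subset_left, ?_, hinj, fun x hx => ⟨?_, ?_⟩⟩
  · rw [← himage, card_image_of_injOn hinj] at hχ
    exact hχ.le
  · exact (mem_inter.mp (himage ▸ mem_image_of_mem χ hx)).1
  · have hx := mem_exceptional.mp (mem_inter.mp (hK' hx)).2
    have hclash : (clashNbrs G χ x).Nonempty := card_pos.mp (by omega)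
    refine ⟨hclash.mono clashNbrs_subset, ?_⟩
    rify at hx
    rw [card_neighborFinset_eq_degree, ← clashNbrs]
    linarith

lemma Admissible.prob_card_filter_mem_le (h : Admissible α β δ d T)
    (hN : Fintype.card C = α * d) (hd : G.degree v ≤ d) (hS : #S ≤ β * δ) :
    prob (fun χ : V → C => δ / 2 ^ 14 < #{u ∈ G.neighborFinset v | χ u ∈ S}) ≤ (2 / 3) ^ T := by
  have hα := h.alpha_pos
  have hβ := h.beta_nonneg
  have hδ := h.delta_pos
  have hd₀ : (0 : ℝ) < d := mod_cast h.d_pos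
  have hdv : (#(G.neighborFinset v) : ℝ) ≤ d := mod_cast hd
  have hrate : β * δ / Fintype.card C * #(G.neighborFinset v) ≤ δ / 2 ^ 14 / 4 :=
    calc β * δ / Fintype.card C * #(G.neighborFinset v) ≤ β * δ / (α * d) * d := by
          rw [hN]
          gcongr
      _ = β / α * δ := by field_simp
      _ ≤ 1 / 2 ^ 16 * δ := by
          refine mul_le_mul_of_nonneg_right ?_ hδ.le
          rw [div_le_iff₀ hα]
          linarith [h.mul_beta_le]
      _ = δ / 2 ^ 14 / 4 := by ring
  have hT : T ≤ δ / 2 ^ 14 := by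
    have := h.T_le_of_two_pow_le 0 h.d_pos
    norm_num at this ⊢
    linarith
  exact (prob_mono fun χ hχ => hχ.le).trans <|
    prob_le_card_filter_mem (fun _ _ => by gcongr) (by positivity) hrate hT

lemma Admissible.prob_not_isBalancedAt_le (h : Admissible α β δ d T) (hG : G.CliqueFree 3)
    (hN : Fintype.card C = α * d) (hd : ∀ v, G.degree v = d) (hδS : δ ≤ #S) (hSβ : #S ≤ β * δ)
    (v : V) :
    prob (fun χ => ¬ IsBalancedAt G α δ χ S v) ≤ 3 * (2 / 3) ^ T := by
  have hsafe := h.prob_card_inter_image_safeNbrs_le hG hN (hd v) hδS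
  have hexc := h.prob_card_inter_image_exceptional_le hN (fun v => (hd v).le) hSβ v
  have hmem := h.prob_card_filter_mem_le hN (hd v).le hSβ
  calc prob (fun χ => ¬ IsBalancedAt G α δ χ S v)
      ≤ _ + prob (fun χ : V → C => _ ∨ _) := prob_le_add_of_imp_or fun χ hχ => by
        rw [isBalancedAt_iff, not_and_or, not_and_or] at hχ
        simpa only [not_lt, not_le] using hχ
    _ ≤ _ + (_ + _) := by
        gcongr
        exact prob_le_add_of_imp_or fun _ => id
    _ ≤ 3 * (2 / 3) ^ T := by linarith

theorem Admissible.exists_forall_isBalancedAt (h : Admissible α β δ d T) (hG : G.CliqueFree 3)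
    (hN : Fintype.card C = α * d) (hd : ∀ v, G.degree v = d) {L : C → Finset C}
    (hδL : ∀ c, δ ≤ #(L c)) (hLβ : ∀ c, #(L c) ≤ β * δ) :
    ∃ χ : V → C, ∀ v c, IsBalancedAt G α δ χ (L c) v := by
  have hα := h.alpha_pos
  have hd₀ : (0 : ℝ) < d := mod_cast h.d_pos
  suffices ∃ χ : V → C, ∀ v, ¬ ∃ c, ¬ IsBalancedAt G α δ χ (L c) v by
    simpa only [not_exists, not_not] using this
  refine exists_forall_not_of_dependsOn_walkBall (k := 3) (fun v => (hd v).le)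
    (fun v χ χ' hχ => ?_) fun v => ?_
  · exact congrArg Exists <| funext fun c => congrArg Not <| dependsOn_isBalancedAt (L c) v hχ
  · calc prob (fun χ => ∃ c, ¬ IsBalancedAt G α δ χ (L c) v)
        ≤ ∑ c, prob (fun χ => ¬ IsBalancedAt G α δ χ (L c) v) :=
          prob_le_sum_of_imp_exists fun χ ⟨c, hc⟩ => ⟨c, mem_univ c, hc⟩
      _ ≤ ∑ _ : C, 3 * (2 / 3) ^ T :=
          sum_le_sum fun c _ => h.prob_not_isBalancedAt_le hG hN hd (hδL c) (hLβ c) v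
      _ = α * d * (3 * (2 / 3) ^ T) := by rw [sum_const, card_univ, nsmul_eq_mul, hN]
      _ ≤ α * d * (3 * (1 / (16 * (d + 1) ^ 6 * (α * d)))) := by
          gcongr
          exact h.pow_le
      _ = 3 / 16 * (1 / (d + 1) ^ 6) := by field_simp
      _ ≤ 1 / 4 * (1 / (d + 1) ^ 6) :=
          mul_le_mul_of_nonneg_right (by norm_num) (by positivity)
      _ = 1 / (4 * (d + 1) ^ (2 * 3)) := by field_simp

end CoreColouring

section Windows

variable {V C : Type*} [DecidableEq V] [DecidableEq C]

lemma exists_subset_injOn_image_inter_eq (f : V → C) {M N : Finset V} (h : M ⊆ N) :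
    ∃ R ⊆ N, Set.InjOn f R ∧ R.image f = N.image f ∧ (R ∩ M).image f = M.image f := by
  classical
  obtain ⟨K, hKM, hK⟩ := Set.exists_subset_bijOn (M : Set V) f
  have hKN : K ⊆ N := hKM.trans (coe_subset.mpr h)
  obtain ⟨R, hKR, hRN, himage, hinj⟩ := hK.injOn.exists_subset_injOn_subset_range_eq hKN
  lift R to Finset V using N.finite_toSet.subset hRN
  refine ⟨R, mod_cast hRN, hinj, mod_cast himage, ?_⟩
  refine (image_subset_image inter_subset_right).antisymm fun c hc => ?_
  rw [← mem_coe, coe_image] at hc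
  obtain ⟨u, hu, rfl⟩ := hK.surjOn hc
  exact mem_image_of_mem f (mem_inter.mpr ⟨mod_cast hKR hu, mod_cast hKM hu⟩)

variable [Fintype V] {G : SimpleGraph V} [DecidableRel G.Adj] {χ : V → C} {W : V → Finset V}
  {u v : V} {S : Finset C} {α δ : ℝ}

variable (G) in
/-- Each `W v` consists of unexceptional neighbours of `v` with distinct colours, and contains a
safe one for every colour that is present at a safe but not at an exceptional neighbour. If `v`
keeps its colour, then the windows of the safe vertices in `W v` contain `v`. -/
structure IsWindow (χ : V → C) (W : V → Finset V) : Prop where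
  subset : ∀ v, W v ⊆ G.neighborFinset v
  notMem_exceptional : ∀ v, ∀ u ∈ W v, u ∉ exceptional G χ
  injOn : ∀ v, Set.InjOn χ (W v)
  image_subset : ∀ v, (safeNbrs G χ v).image χ \ (G.neighborFinset v ∩ exceptional G χ).image χ ⊆
    (W v ∩ safeNbrs G χ v).image χ
  mem_comm : ∀ v ∉ exceptional G χ, ∀ u ∈ W v ∩ safeNbrs G χ v, v ∈ W u

lemma eq_of_mem_safeNbrs (hv : v ∉ exceptional G χ) (hu : u ∈ safeNbrs G χ v) {w : V}
    (hw : w ∈ G.neighborFinset u) (h : χ w = χ v) : w = v := by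
  rw [safeNbrs, if_neg hv, mem_sdiff] at hu
  by_contra hne
  exact hu.2 (mem_filter.mpr ⟨hu.1, w, hw, hne, h⟩)

variable (G χ) in
lemma exists_isWindow : ∃ W, IsWindow G χ W := by
  choose R hRN hinj himage hsafe using fun v =>
    exists_subset_injOn_image_inter_eq χ (safeNbrs_subset (G := G) (χ := χ) (v := v))
  refine ⟨fun v => {u ∈ R v | χ u ∉ (G.neighborFinset v ∩ exceptional G χ).image χ},
    fun v => (filter_subset _ _).trans (hRN v), fun v u hu hexc => ?_,
    fun v => (hinj v).mono (coe_subset.mpr (filter_subset _ _)), fun v c hc => ?_,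
    fun v hv u hu => ?_⟩
  · obtain ⟨huR, hu⟩ := mem_filter.mp hu
    exact hu (mem_image_of_mem χ (mem_inter.mpr ⟨hRN v huR, hexc⟩))
  · obtain ⟨hc, hexc⟩ := mem_sdiff.mp hc
    rw [← hsafe] at hc
    obtain ⟨u, hu, rfl⟩ := mem_image.mp hc
    obtain ⟨huR, hu⟩ := mem_inter.mp hu
    exact mem_image_of_mem χ (mem_inter.mpr ⟨mem_filter.mpr ⟨huR, hexc⟩, hu⟩)
  · have hu := (mem_inter.mp hu).2
    have hvu : v ∈ G.neighborFinset u := by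
      simpa [G.adj_comm] using safeNbrs_subset hu
    obtain ⟨w, hw, hwv⟩ := mem_image.mp (himage u ▸ mem_image_of_mem χ hvu)
    obtain rfl := eq_of_mem_safeNbrs hv hu (hRN u hw) hwv
    refine mem_filter.mpr ⟨hw, fun hexc => ?_⟩
    obtain ⟨x, hx, hxw⟩ := mem_image.mp hexc
    obtain ⟨hxu, hx⟩ := mem_inter.mp hx
    exact hv (eq_of_mem_safeNbrs hv hu hxu hxw ▸ hx)

lemma IsWindow.le_card_filter (hW : IsWindow G χ W) (h : IsBalancedAt G α δ χ S v) :
    δ / (2 * α) ≤ #{u ∈ W v ∩ safeNbrs G χ v | χ u ∈ S} := by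
  set A := S ∩ (safeNbrs G χ v).image χ
  set B := S ∩ (G.neighborFinset v ∩ exceptional G χ).image χ
  have hcard : #(A \ B) ≤ #{u ∈ W v ∩ safeNbrs G χ v | χ u ∈ S} := by
    refine (card_le_card fun c hc => ?_).trans (card_image_le (f := χ))
    obtain ⟨hcA, hcB⟩ := mem_sdiff.mp hc
    obtain ⟨hcS, hsafe⟩ := mem_inter.mp hcA
    obtain ⟨u, hu, rfl⟩ := mem_image.mp <| hW.image_subset v <|
      mem_sdiff.mpr ⟨hsafe, fun hexc => hcB (mem_inter.mpr ⟨hcS, hexc⟩)⟩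
    exact mem_image_of_mem χ (mem_filter.mpr ⟨hu, hcS⟩)
  have hsdiff := tsub_le_iff_right.mp ((le_card_sdiff B A).trans hcard)
  rify at hsdiff
  have : δ / (2 * α) = 9 * δ / (16 * α) - δ / (16 * α) := by ring
  linarith [h.lt_card_safe, h.card_exceptional_le]

end Windows

section Recolouring

variable {V C : Type*} [Fintype V] [DecidableEq V] [DecidableEq C]
  {G : SimpleGraph V} [DecidableRel G.Adj] {𝒢 : SimpleGraph C}
  {χ f : V → C} {W F : V → Finset V} {u v x : V} {h α δ : ℝ}

variable (G) in
/-- The colouring `χ` with the exceptional vertices recoloured by `f`. -/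
def recolour (χ f : V → C) : V → C :=
  (exceptional G χ).piecewise f χ

variable (G) in
/-- The vertices that `v` may be joined to: those in `F v` if `v` is exceptional, and otherwise its
window `W v` together with the exceptional vertices `x` for which `v ∈ F x`. -/
def links (χ : V → C) (W F : V → Finset V) (v : V) : Finset V :=
  if v ∈ exceptional G χ then F v else W v ∪ incident (exceptional G χ) F v

variable (G 𝒢) in
/-- The edges of `G` which the recolouring maps to edges of `𝒢` and whose ends link to each
other. -/
def linkGraph (χ : V → C) (W : V → Finset V) (f : V → C) (F : V → Finset V) : SimpleGraph V where
  Adj u v := G.Adj u v ∧ 𝒢.Adj (recolour G χ f u) (recolour G χ f v) ∧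
    v ∈ links G χ W F u ∧ u ∈ links G χ W F v
  symm := ⟨fun _ _ h => ⟨h.1.symm, h.2.1.symm, h.2.2.symm⟩⟩
  loopless := ⟨fun _ h => h.1.ne rfl⟩

lemma recolour_of_mem (hv : v ∈ exceptional G χ) : recolour G χ f v = f v :=
  piecewise_eq_of_mem _ _ _ hv

lemma recolour_of_notMem (hv : v ∉ exceptional G χ) : recolour G χ f v = χ v :=
  piecewise_eq_of_notMem _ _ _ hv

lemma links_of_mem (hv : v ∈ exceptional G χ) : links G χ W F v = F v :=
  if_pos hv

lemma links_of_notMem (hv : v ∉ exceptional G χ) :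
    links G χ W F v = W v ∪ incident (exceptional G χ) F v :=
  if_neg hv

variable [Fintype C] [DecidableRel 𝒢.Adj]

variable (G 𝒢) in
/-- The colours which are allowed next to `v` and already occur there. -/
def usedColours (χ : V → C) (v : V) : Finset C :=
  {u ∈ G.neighborFinset v | χ u ∈ 𝒢.neighborFinset (χ v)}.image χ

variable (G 𝒢) in
/-- `W` is a system of windows for `χ`, and `f`, `F` extend the colouring of the unexceptional
vertices to the exceptional ones, giving each of these at least `h` neighbours. -/
structure IsRecolouring (χ : V → C) (W : V → Finset V) (h : ℝ) (f : V → C) (F : V → Finset V) :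
    Prop where
  isWindow : IsWindow G χ W
  isExtension : IsExtension (exceptional G χ) W (fun v => 𝒢.neighborFinset (χ v))
    (usedColours G 𝒢 χ) h f F

namespace IsRecolouring

lemma subset_window (H : IsRecolouring G 𝒢 χ W h f F) (hx : x ∈ exceptional G χ) : F x ⊆ W x :=
  (H.isExtension.subset_carriers x hx).trans (filter_subset _ _)

lemma recolour_ne (H : IsRecolouring G 𝒢 χ W h f F) (hu : u ∈ W v) (huv : 𝒢.Adj (χ v) (χ u))
    (hx : x ∈ incident (exceptional G χ) F v) : recolour G χ f u ≠ recolour G χ f x := by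
  obtain ⟨hx, hvx⟩ := mem_filter.mp hx
  rw [recolour_of_notMem (H.isWindow.notMem_exceptional v u hu), recolour_of_mem hx]
  have hused : χ u ∈ usedColours G 𝒢 χ v := mem_image_of_mem χ <|
    mem_filter.mpr ⟨H.isWindow.subset v hu, (𝒢.mem_neighborFinset _ _).mpr huv⟩
  exact fun heq => H.isExtension.notMem_used x hx v hvx (heq ▸ hused)

lemma injOn_window (H : IsRecolouring G 𝒢 χ W h f F) (v : V) :
    Set.InjOn (recolour G χ f) (W v) :=
  (H.isWindow.injOn v).congr fun _ hu =>
    (recolour_of_notMem (H.isWindow.notMem_exceptional v _ hu)).symm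

lemma injOn_incident (H : IsRecolouring G 𝒢 χ W h f F) (v : V) :
    Set.InjOn (recolour G χ f) (incident (exceptional G χ) F v) := by
  intro x hx y hy hxy
  obtain ⟨hx, hvx⟩ := mem_filter.mp (mem_coe.mp hx)
  obtain ⟨hy, hvy⟩ := mem_filter.mp (mem_coe.mp hy)
  rw [recolour_of_mem hx, recolour_of_mem hy] at hxy
  by_contra hne
  exact disjoint_left.mp (H.isExtension.disjoint x hx y hy hne hxy) hvx hvy

lemma injOn_neighborSet (H : IsRecolouring G 𝒢 χ W h f F) (v : V) :
    Set.InjOn (recolour G χ f) ((linkGraph G 𝒢 χ W f F).neighborSet v) := by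
  rintro x ⟨-, hvx, hx, -⟩ y ⟨-, hvy, hy, -⟩ hxy
  by_cases hv : v ∈ exceptional G χ
  · rw [links_of_mem hv] at hx hy
    exact H.injOn_window v (H.subset_window hv hx) (H.subset_window hv hy) hxy
  · rw [links_of_notMem hv, mem_union] at hx hy
    have hadj {u : V} (hu : u ∈ W v)
        (h : 𝒢.Adj (recolour G χ f v) (recolour G χ f u)) : 𝒢.Adj (χ v) (χ u) := by
      rwa [recolour_of_notMem hv,
        recolour_of_notMem (H.isWindow.notMem_exceptional v u hu)] at h
    rcases hx with hx | hx <;> rcases hy with hy | hy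
    · exact H.injOn_window v hx hy hxy
    · exact absurd hxy (H.recolour_ne hx (hadj hx hvx) hy)
    · exact absurd hxy.symm (H.recolour_ne hy (hadj hy hvy) hx)
    · exact H.injOn_incident v hx hy hxy

lemma subset_neighborSet_of_mem (H : IsRecolouring G 𝒢 χ W h f F) (hv : v ∈ exceptional G χ) :
    ↑(F v) ⊆ (linkGraph G 𝒢 χ W f F).neighborSet v := by
  intro u hu
  have huW := H.subset_window hv hu
  have huE := H.isWindow.notMem_exceptional v u huW
  have hadj := (mem_filter.mp (H.isExtension.subset_carriers v hv hu)).2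
  refine ⟨(G.mem_neighborFinset v u).mp (H.isWindow.subset v huW), ?_, ?_, ?_⟩
  · rw [recolour_of_mem hv, recolour_of_notMem huE]
    exact ((𝒢.mem_neighborFinset _ _).mp hadj).symm
  · rwa [links_of_mem hv]
  · rw [links_of_notMem huE]
    exact mem_union_right _ (mem_filter.mpr ⟨hv, hu⟩)

lemma subset_neighborSet_of_notMem (H : IsRecolouring G 𝒢 χ W h f F) (hv : v ∉ exceptional G χ) :
    ↑{u ∈ W v ∩ safeNbrs G χ v | χ u ∈ 𝒢.neighborFinset (χ v)} ⊆
      (linkGraph G 𝒢 χ W f F).neighborSet v := by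
  intro u hu
  obtain ⟨hu, hadj⟩ := mem_filter.mp (mem_coe.mp hu)
  have huW := (mem_inter.mp hu).1
  have huE := H.isWindow.notMem_exceptional v u huW
  refine ⟨(G.mem_neighborFinset v u).mp (H.isWindow.subset v huW), ?_, ?_, ?_⟩
  · rw [recolour_of_notMem hv, recolour_of_notMem huE]
    exact (𝒢.mem_neighborFinset _ _).mp hadj
  · rw [links_of_notMem hv]
    exact mem_union_left _ huW
  · rw [links_of_notMem huE]
    exact mem_union_left _ (H.isWindow.mem_comm v hv u hu)

lemma le_ncard_neighborSet (H : IsRecolouring G 𝒢 χ W h f F) (hh : h ≤ δ / (2 * α))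
    (hbal : IsBalancedAt G α δ χ (𝒢.neighborFinset (χ v)) v) :
    h ≤ ((linkGraph G 𝒢 χ W f F).neighborSet v).ncard := by
  suffices ∃ S : Finset V, h ≤ #S ∧ ↑S ⊆ (linkGraph G 𝒢 χ W f F).neighborSet v by
    obtain ⟨S, hS, hsub⟩ := this
    have := Set.ncard_le_ncard hsub
    rw [Set.ncard_coe_finset] at this
    exact hS.trans (mod_cast this)
  by_cases hv : v ∈ exceptional G χ
  · exact ⟨F v, H.isExtension.le_card v hv, H.subset_neighborSet_of_mem hv⟩
  · exact ⟨_, hh.trans (H.isWindow.le_card_filter hbal), H.subset_neighborSet_of_notMem hv⟩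

end IsRecolouring

variable [Nonempty C] {β : ℝ} {d T : ℕ}

lemma Admissible.exists_isRecolouring (h : Admissible α β δ d T) (hN : Fintype.card C = α * d)
    (hd : ∀ v, G.degree v ≤ d) (h𝒢 : ∀ c, 𝒢.degree c ≤ β * δ)
    (hχ : ∀ v c, IsBalancedAt G α δ χ (𝒢.neighborFinset c) v) :
    ∃ W f F, IsRecolouring G 𝒢 χ W (δ / (2 * α) / 2) f F := by
  obtain ⟨W, hW⟩ := exists_isWindow G χ
  have hcarriers (x : V) (c : C) :
      δ / (2 * α) ≤ #(carriers W (fun v => 𝒢.neighborFinset (χ v)) x c) := by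
    refine (hW.le_card_filter (hχ x c)).trans (mod_cast card_le_card fun u hu => ?_)
    obtain ⟨hu, huc⟩ := mem_filter.mp hu
    exact mem_filter.mpr ⟨(mem_inter.mp hu).1, by simpa [𝒢.adj_comm] using huc⟩
  have hused (v : V) : #(usedColours G 𝒢 χ v) ≤ usedBudget δ 0 := by
    refine (Nat.cast_le.mpr card_image_le).trans ((hχ v (χ v)).card_le.trans_eq ?_)
    rw [usedBudget]
    ring
  have hincident (v : V) : #(incident (exceptional G χ) W v) ≤ d := by
    refine (card_le_card fun x hx => ?_).trans (hd v)
    simpa [G.adj_comm] using hW.subset x (mem_filter.mp hx).2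
  obtain ⟨f, F, hF⟩ := h.exists_isExtension hN hd hW.subset (fun v => h𝒢 (χ v))
    (fun x _ => hcarriers x) hused hincident (by simp)
  exact ⟨W, f, F, hW, hF⟩

end Recolouring

section Assembly

variable {V C : Type*} [Fintype V] [Fintype C] [Nonempty C] {G : SimpleGraph V}
  [DecidableRel G.Adj] {𝒢 : SimpleGraph C} [DecidableRel 𝒢.Adj] {α β δ : ℝ} {d T : ℕ}

theorem Admissible.exists_subgraph_hom (h : Admissible α β δ d T) (hG : G.CliqueFree 3)
    (hN : Fintype.card C = α * d) (hd : ∀ v, G.degree v = d) (hδ𝒢 : ∀ c, δ ≤ 𝒢.degree c)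
    (h𝒢β : ∀ c, 𝒢.degree c ≤ β * δ) :
    ∃ (H : SimpleGraph V) (χ : V → C), H ≤ G ∧ (∀ v, δ / (4 * α) ≤ (H.neighborSet v).ncard) ∧
      (∀ v, Set.InjOn χ (H.neighborSet v)) ∧ ∀ u v, H.Adj u v → 𝒢.Adj (χ u) (χ v) := by
  classical
  have hα := h.alpha_pos
  have hδ := h.delta_pos
  obtain ⟨χ, hχ⟩ := h.exists_forall_isBalancedAt hG hN hd hδ𝒢 h𝒢β
  obtain ⟨W, f, F, hrec⟩ := h.exists_isRecolouring hN (fun v => (hd v).le) h𝒢β hχ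
  refine ⟨linkGraph G 𝒢 χ W f F, recolour G χ f, fun _ _ hadj => hadj.1, fun v => ?_,
    hrec.injOn_neighborSet, fun _ _ hadj => hadj.2.1⟩
  calc δ / (4 * α) = δ / (2 * α) / 2 := by
        field_simp
        norm_num
    _ ≤ ((linkGraph G 𝒢 χ W f F).neighborSet v).ncard :=
        hrec.le_ncard_neighborSet (half_le_self (by positivity)) (hχ v (χ v))

end Assembly

section Asymptotics

open Real Filter

lemma eventually_mul_log_pow_le_rpow (K : ℝ) {ε : ℝ} (hε : 0 < ε) (k : ℕ) :
    ∀ᶠ x : ℝ in atTop, K * log x ^ k ≤ x ^ ε := by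
  have hlittle := (isLittleO_log_rpow_rpow_atTop (k : ℝ) hε).const_mul_left K
  filter_upwards [hlittle.bound one_pos, eventually_ge_atTop 0] with x hx hx0
  rw [rpow_natCast, one_mul, norm_of_nonneg (rpow_nonneg hx0 ε)] at hx
  exact (le_norm_self _).trans hx

lemma natCast_le_two_mul_log_of_two_pow_le {i d : ℕ} (hi : 2 ^ i ≤ d) :
    (i : ℝ) ≤ 2 * log d := by
  have hlog : i * log 2 ≤ log d := by
    rw [← log_pow]
    exact log_le_log (by positivity) (mod_cast hi)
  nlinarith [log_two_gt_d9, Nat.cast_nonneg (α := ℝ) i]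

lemma two_thirds_pow_floor_sq_le_exp {l a : ℝ} (hl : 24 + 3 * a ≤ l) (ha : 0 ≤ a) :
    (2 / 3 : ℝ) ^ ⌊l ^ 2⌋₊ ≤ exp (-(a + 7 * l)) := by
  have hbase : (2 / 3 : ℝ) ≤ exp (-(1 / 3)) := by linarith [add_one_le_exp (-(1 / 3) : ℝ)]
  have hfloor := Nat.lt_floor_add_one (l ^ 2)
  calc (2 / 3 : ℝ) ^ ⌊l ^ 2⌋₊ ≤ exp (-(1 / 3)) ^ ⌊l ^ 2⌋₊ := by gcongr
    _ = exp (⌊l ^ 2⌋₊ * (-(1 / 3))) := (exp_nat_mul _ _).symm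
    _ ≤ exp (-(a + 7 * l)) := exp_le_exp.mpr (by nlinarith)

lemma sixteen_mul_add_one_pow_mul_le_exp {α x : ℝ} (hα : 0 < α) (hx : 1 ≤ x) :
    16 * (x + 1) ^ 6 * (α * x) ≤ exp (log (1024 * α) + 7 * log x) := by
  have hexp : exp (7 * log x) = x ^ 7 := by
    rw [mul_comm, exp_mul, exp_log (by positivity)]
    exact mod_cast rpow_natCast x 7
  calc 16 * (x + 1) ^ 6 * (α * x) ≤ 16 * (x + x) ^ 6 * (α * x) := by gcongr
    _ = exp (log (1024 * α) + 7 * log x) := by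
        rw [exp_add, exp_log (by positivity), hexp]
        ring

/-- `T` is the integer part of `(log d)²`: large enough for `(2/3)^T` to beat every power of `d`,
and still negligible against `d^ε`. -/
lemma admissible_floor_log_sq {α β δ : ℝ} {d : ℕ} (hα : 256 ≤ α) (hβ : 0 ≤ β)
    (hβα : 24 * 2 ^ 13 * β ≤ α) (hd : 0 < d) (hlog : 24 + 3 * log (1024 * α) ≤ log d)
    (hδ : 25 * 2 ^ 13 * α * log d ^ 4 ≤ δ) : Admissible α β δ d ⌊log d ^ 2⌋₊ := by
  have hd' : (1 : ℝ) ≤ d := mod_cast hd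
  have hlogα : 0 ≤ log (1024 * α) := log_nonneg (by linarith)
  set l := log d
  have hl : 24 ≤ l := by linarith
  have hT : (⌊l ^ 2⌋₊ : ℝ) ≤ l ^ 2 := Nat.floor_le (by positivity)
  have hl4 : 0 ≤ α * l ^ 4 := by positivity
  have hαl4 : l ^ 4 ≤ α * l ^ 4 := le_mul_of_one_le_left (by positivity) (by linarith)
  exact
    { le_alpha := hα
      beta_nonneg := hβ
      mul_beta_le := hβα
      d_pos := hd
      T_pos := Nat.le_floor (mod_cast one_le_pow₀ (by linarith))
      T_le := by
        rw [le_div_iff₀ (by positivity)]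
        calc ⌊l ^ 2⌋₊ * (16 * α) ≤ l ^ 4 * (16 * α) := by
              gcongr
              exact hT.trans (pow_le_pow_right₀ (by linarith) (by norm_num))
          _ ≤ δ := by linarith
      T_le_of_two_pow_le := fun i hi => by
        have hi' := natCast_le_two_mul_log_of_two_pow_le hi
        rw [div_div, le_div_iff₀ (by positivity)]
        calc ⌊l ^ 2⌋₊ * (2 ^ 13 * ((i + 2) * (i + 3)))
            ≤ l ^ 2 * (2 ^ 13 * ((5 * l) * (5 * l))) := by gcongr <;> linarith
          _ = 25 * 2 ^ 13 * l ^ 4 := by ring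
          _ ≤ δ := by linarith
      pow_le := by
        calc (2 / 3 : ℝ) ^ ⌊l ^ 2⌋₊ ≤ exp (-(log (1024 * α) + 7 * l)) :=
              two_thirds_pow_floor_sq_le_exp hlog hlogα
          _ ≤ 1 / (16 * (d + 1) ^ 6 * (α * d)) := by
              rw [exp_neg, ← one_div]
              exact one_div_le_one_div_of_le (by positivity)
                (sixteen_mul_add_one_pow_mul_le_exp (by linarith) hd') }

lemma exists_forall_admissible {ε α β : ℝ} (hε : 0 < ε) (hα : 256 ≤ α) (hβ : 0 ≤ β)
    (hβα : 24 * 2 ^ 13 * β ≤ α) :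
    ∃ d₀ : ℕ, ∀ d ≥ d₀, ∀ δ : ℝ, (d : ℝ) ^ ε < δ → ∃ T, Admissible α β δ d T := by
  have hlog := tendsto_log_atTop.eventually_ge_atTop (24 + 3 * log (1024 * α))
  have hpow := eventually_mul_log_pow_le_rpow (25 * 2 ^ 13 * α) hε 4
  obtain ⟨d₀, hd₀⟩ := eventually_atTop.mp <| (tendsto_natCast_atTop_atTop (R := ℝ)).eventually <|
    hlog.and <| hpow.and <| eventually_gt_atTop 0
  refine ⟨d₀, fun d hd δ hδ => ⟨⌊log d ^ 2⌋₊, ?_⟩⟩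
  obtain ⟨hdlog, hdpow, hdpos⟩ := hd₀ d hd
  exact admissible_floor_log_sq hα hβ hβα (mod_cast hdpos) hdlog (hdpow.trans hδ.le)

end Asymptotics

section Degrees

variable {V : Type*} [Fintype V] (G : SimpleGraph V)

lemma degree_eq_deg [DecidableRel G.Adj] (v : V) : G.degree v = deg G v := by
  rw [deg, Set.ncard_eq_toFinset_card', ← neighborFinset_def, card_neighborFinset_eq_degree]

lemma minDeg_le_deg (v : V) : minDeg G ≤ deg G v :=
  ciInf_le (OrderBot.bddBelow _) v

lemma deg_le_maxDeg (v : V) : deg G v ≤ maxDeg G :=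
  le_ciSup (Set.finite_range (deg G)).bddAbove v

end Degrees

lemma cliqueFree_three_of_bipartition {V : Type*} {G : SimpleGraph V} {A B : Set V}
    (hAB : Disjoint A B) (hcross : ∀ u v, G.Adj u v → (u ∈ A ∧ v ∈ B) ∨ (u ∈ B ∧ v ∈ A)) :
    G.CliqueFree 3 := by
  have hbip : G.IsBipartiteWith A B := ⟨hAB, fun u v huv => hcross u v huv⟩
  exact Colorable.cliqueFree hbip.isBipartite (by norm_num)

theorem statement4_general {ε β : ℝ} (hε : 0 < ε) (hβ : 0 ≤ β) :
    ∃ α₀ : ℝ, ∀ α ≥ α₀, ∃ d₀ : ℕ, ∀ d ≥ d₀,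
      ∀ (V : Type*) [Fintype V] (G : SimpleGraph V), G.CliqueFree 3 → RegularDeg G d →
        ∀ (C : Type*) [Fintype C] (𝒢 : SimpleGraph C), Fintype.card C = α * d →
          maxDeg 𝒢 ≤ β * minDeg 𝒢 → (d : ℝ) ^ ε < minDeg 𝒢 →
          ∃ (H : SimpleGraph V) (χ : V → C), H ≤ G ∧
            (∀ v, minDeg 𝒢 / (4 * α) ≤ deg H v) ∧
            (∀ v, Set.InjOn χ (H.neighborSet v)) ∧ ∀ u v, H.Adj u v → 𝒢.Adj (χ u) (χ v) := by
  refine ⟨max 256 (24 * 2 ^ 13 * β), fun α hα => ?_⟩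
  obtain ⟨hα256, hαβ⟩ := max_le_iff.mp hα
  obtain ⟨d₀, hd₀⟩ := exists_forall_admissible hε hα256 hβ hαβ
  refine ⟨d₀, fun d hd V _ G hG hreg C _ 𝒢 hcard hmax hmin => ?_⟩
  classical
  obtain ⟨T, hadm⟩ := hd₀ d hd _ hmin
  have : Nonempty C := Fintype.card_pos_iff.mp <| Nat.cast_pos.mp <| hcard ▸
    mul_pos hadm.alpha_pos (Nat.cast_pos.mpr hadm.d_pos)
  refine hadm.exists_subgraph_hom hG hcard (fun v => (degree_eq_deg G v).trans (hreg v))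
    (fun c => ?_) (fun c => ?_)
  · rw [degree_eq_deg]
    exact mod_cast minDeg_le_deg 𝒢 c
  · rw [degree_eq_deg]
    exact le_trans (mod_cast deg_le_maxDeg 𝒢 c) hmax

theorem statement4 (ε : ℝ) (hε : 0 < ε) (β : ℕ) (hβ : 1 ≤ β) :
    ∃ α₀ : ℕ, ∀ α : ℕ, 32 * β ≤ α → α₀ ≤ α →
      ∃ d₀ : ℕ, ∀ d : ℕ, d₀ ≤ d →
        ∀ (V : Type) [Fintype V] (G : SimpleGraph V) (A B : Set V),
          Disjoint A B → A ∪ B = Set.univ →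
          (∀ u v : V, G.Adj u v → (u ∈ A ∧ v ∈ B) ∨ (u ∈ B ∧ v ∈ A)) →
          RegularDeg G d →
          ∀ 𝒢 : SimpleGraph (Fin (α * d)),
            maxDeg 𝒢 ≤ β * minDeg 𝒢 →
            (d : ℝ) ^ ε < (minDeg 𝒢 : ℝ) →
            ∃ (H : SimpleGraph V) (χ : V → Fin (α * d)), H ≤ G ∧
              (∀ v : V, (minDeg 𝒢 : ℝ) / (4 * (α : ℝ)) ≤ (deg H v : ℝ)) ∧
              (∀ v : V, Set.InjOn χ (H.neighborSet v)) ∧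
              (∀ u v : V, H.Adj u v → 𝒢.Adj (χ u) (χ v)) := by
  obtain ⟨α₀, hα₀⟩ := statement4_general hε β.cast_nonneg
  refine ⟨⌈α₀⌉₊, fun α _ hα => ?_⟩
  obtain ⟨d₀, hd₀⟩ := hα₀ α (Nat.ceil_le.mp hα)
  exact ⟨d₀, fun d hd V _ G A B hAB _ hcross hreg 𝒢 hmax hmin =>
    hd₀ d hd V G (cliqueFree_three_of_bipartition hAB hcross) hreg _ 𝒢 (by simp)
      (mod_cast hmax) hmin⟩
end

section
/- For every integer r ≥ 1 there exist a constant c > 0 and an integer d₀ such that for all d ≥ d₀, every d-regular graph G has a spanning subgraph H with girth at least 2r + 2 (i.e., H contains no cycle of length at most 2r + 1) and minimum degree δ(H) ≥ c · d^{1/(2r−1)}. -/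
open SimpleGraph

/-!
Pass to a maximum cut `B` of `G`, which is bipartite and keeps half of every degree. Among the
subgraphs of `B` of girth at least `2r + 1` and maximum degree at most `L = O(k)`, let `H` maximize
`∑ min (deg H v) k`, and suppose that some `v` has degree less than `k`. Grow a set `S` of vertices
of degree `L` on the side opposite to `v`, every `H`-neighbour `x` of which is a *donor*: exchanging
edges at `S` moves one unit of degree from `x` to `v`. By maximality of `H`, donors have degree at
most `k`, so there are about `L / k` times as many donors as vertices in `S`, too many for all their
`B`-edges to end in `S`. As balls of radius `2r - 1` in graphs of maximum degree `L` have only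
`O(L ^ (2r - 1))` vertices, some donor `x` can be joined to a far away `s ∉ S` without creating a
short cycle. By maximality `s` has degree `L`, and it can be added to `S`: give `x` the new edge
`xs` and delete any other edge `sy`, which makes `y` a donor. This never stops, which is absurd.
Since `H` is bipartite, its girth is even and hence at least `2r + 2`.
-/

section Girth
variable {V : Type*} {G H : SimpleGraph V}

lemma not_containsCopy_cycleGraph_of_lt_egirth {j : ℕ} (hj : 3 ≤ j) (h : j < H.egirth) :
    ¬ ContainsCopy (cycleGraph j) H := by
  rintro ⟨f, hf⟩
  obtain ⟨_, p, hp, rfl⟩ := (cycleGraph_isContained_iff hj).mp ⟨f, hf⟩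
  exact h.not_ge (egirth_le_length hp)

lemma le_egirth_of_coloring_of_odd_le {m : ℕ} (C : H.Coloring Bool) (hm : Odd m)
    (h : m ≤ H.egirth) : (m + 1 : ℕ) ≤ H.egirth := by
  refine le_egirth.mpr fun a w hw => ?_
  have hlen : m ≤ w.length := by exact_mod_cast h.trans (egirth_le_length hw)
  have heven : Even w.length := (C.even_length_iff_congr w).mpr Iff.rfl
  have hne : m ≠ w.length := fun e => Nat.not_even_iff_odd.mpr hm (e ▸ heven)
  exact_mod_cast hlen.lt_of_ne hne

lemma exists_walk_of_isCycle_of_snd {u v : V} {c : G.Walk u u} (hc : c.IsCycle) (hv : c.snd = v) :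
    ∃ p : G.Walk u v, p.length + 1 = c.length ∧ s(u, v) ∉ p.edges := by
  subst hv
  refine ⟨c.tail.reverse, ?_, ?_⟩
  · rw [Walk.length_reverse, Walk.length_tail_add_one hc.not_nil]
  · rw [← c.cons_tail_eq hc.not_nil, Walk.cons_isCycle_iff] at hc
    simpa using hc.2

lemma exists_walk_of_isCycle_of_mem_edges {a u v : V} {c : G.Walk a a} (hc : c.IsCycle)
    (he : s(u, v) ∈ c.edges) :
    ∃ p : G.Walk u v, p.length + 1 = c.length ∧ s(u, v) ∉ p.edges := by
  classical
  have hu : u ∈ c.support := c.fst_mem_support_of_mem_edges he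
  have hrot : (c.rotate u hu).IsCycle := hc.rotate hu
  have hlen : (c.rotate u hu).length = c.length := by simp
  have hv : v ∈ (c.rotate u hu).toSubgraph.neighborSet u := by
    rw [Subgraph.mem_neighborSet, ← Subgraph.mem_edgeSet, Walk.mem_edges_toSubgraph]
    exact (c.rotate_edges u hu).mem_iff.mpr he
  rw [hrot.neighborSet_toSubgraph_endpoint] at hv
  rw [← hlen]
  rcases hv with hsnd | hpen
  · exact exists_walk_of_isCycle_of_snd hrot hsnd.symm
  · simpa using exists_walk_of_isCycle_of_snd hrot.reverse
      ((Walk.snd_reverse _).trans (Set.mem_singleton_iff.mp hpen).symm)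

lemma min_edist_add_one_egirth_le_egirth_sup_edge (H : SimpleGraph V) (s t : V) :
    min (H.edist s t + 1) H.egirth ≤ (H ⊔ edge s t).egirth := by
  refine le_egirth.mpr fun a c hc => ?_
  have hedge : ∀ e ∈ (H ⊔ edge s t).edgeSet, e ≠ s(s, t) → e ∈ H.edgeSet := by
    intro e he hne
    rw [edgeSet_sup] at he
    exact he.resolve_right fun h => hne (edgeSet_edge_subset h)
  by_cases hmem : s(s, t) ∈ c.edges
  · obtain ⟨p, hlen, hp⟩ := exists_walk_of_isCycle_of_mem_edges hc hmem
    let q : H.Walk s t := p.transfer H fun e he =>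
      hedge e (p.edges_subset_edgeSet he) (ne_of_mem_of_not_mem he hp)
    calc min (H.edist s t + 1) H.egirth ≤ H.edist s t + 1 := min_le_left _ _
      _ ≤ q.length + 1 := by gcongr; exact edist_le q
      _ = c.length := by simp [q, ← hlen]
  · have hq := hc.transfer fun e he =>
      hedge e (c.edges_subset_edgeSet he) (ne_of_mem_of_not_mem he hmem)
    simpa using min_le_of_right_le (egirth_le_length hq)

end Girth

section Degree
variable {V : Type*} {G H : SimpleGraph V}

lemma deg_mono [Finite V] (h : H ≤ G) (v : V) : deg H v ≤ deg G v :=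
  Set.ncard_le_ncard fun _ hu => h hu

lemma deg_sup_edge_left [Finite V] {x s : V} (hne : x ≠ s) (hn : ¬ H.Adj x s) :
    deg (H ⊔ edge x s) x = deg H x + 1 := by
  have hnbr : (H ⊔ edge x s).neighborSet x = insert s (H.neighborSet x) := by
    ext u
    simp only [mem_neighborSet, sup_adj, edge_adj, Set.mem_insert_iff]
    grind
  rw [deg, hnbr, Set.ncard_insert_of_notMem (by simpa using hn), deg]

lemma deg_sup_edge [Finite V] [DecidableEq V] {x s : V} (hne : x ≠ s) (hn : ¬ H.Adj x s) :
    deg (H ⊔ edge x s) = deg H + Pi.single x 1 + Pi.single s 1 := by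
  ext y
  obtain rfl | hx := eq_or_ne y x
  · simp [deg_sup_edge_left hne hn, hne]
  obtain rfl | hs := eq_or_ne y s
  · simp [edge_comm x, deg_sup_edge_left hne.symm (mt Adj.symm hn), hx]
  · have hnbr : (H ⊔ edge x s).neighborSet y = H.neighborSet y := by
      ext u
      simp [edge_adj, hx, hs]
    simp [deg, hnbr, hx, hs]

lemma deg_sdiff_edge [Finite V] [DecidableEq V] {x s : V} (h : H.Adj x s) :
    deg (H \ edge x s) + Pi.single x 1 + Pi.single s 1 = deg H := by
  rw [← deg_sup_edge h.ne (by simp [edge_adj, h.ne]),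
    sdiff_sup_cancel ((edge_le_iff H).mpr (Or.inr h))]

lemma ball_add_one_subset {r : ℕ∞} (hr : 0 < r) (x : V) :
    H.ball x (r + 1) ⊆ ⋃ y ∈ H.ball x r, insert y (H.neighborSet y) := by
  intro z hz
  obtain ⟨w, hw⟩ := exists_walk_of_edist_ne_top (mem_ball.mp hz).ne_top
  have hlen : (w.length : ℕ∞) ≤ r := by
    rw [← ENat.natCast_lt_add_one_iff, hw]
    exact hz
  rw [Set.mem_iUnion₂]
  cases w with
  | nil => exact ⟨x, mem_ball_self hr, Set.mem_insert x _⟩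
  | @cons _ y _ hadj p =>
    refine ⟨y, (edist_le p).trans_lt ?_, Set.mem_insert_of_mem y hadj.symm⟩
    rw [Walk.length_cons, Nat.cast_add, Nat.cast_one] at hlen
    exact (ENat.add_one_le_iff (ENat.natCast_ne_top _)).mp hlen

lemma ncard_biUnion_le_ncard_mul {α β : Type*} [Finite α] [Finite β] (s : Set α) (t : α → Set β)
    (n : ℕ) (h : ∀ a ∈ s, (t a).ncard ≤ n) : (⋃ a ∈ s, t a).ncard ≤ s.ncard * n := by
  classical
  have := Fintype.ofFinite α
  have := Fintype.ofFinite β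
  have hcoe : ⋃ a ∈ s, t a = s.toFinset.biUnion fun a => (t a).toFinset := by simp
  rw [hcoe, Set.ncard_coe_finset, Set.ncard_eq_toFinset_card']
  refine Finset.card_biUnion_le_card_mul _ _ _ fun a ha => ?_
  rw [← Set.ncard_eq_toFinset_card']
  exact h a (Set.mem_toFinset.mp ha)

lemma ncard_ball_le [Finite V] {L : ℕ} (hL : ∀ v, deg H v ≤ L) (x : V) (n : ℕ) :
    (H.ball x (n + 1)).ncard ≤ (L + 1) ^ n := by
  induction n with
  | zero => simp
  | succ n ih =>
    calc (H.ball x ((n + 1 : ℕ) + 1)).ncard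
        ≤ (⋃ y ∈ H.ball x (n + 1), insert y (H.neighborSet y)).ncard :=
          Set.ncard_le_ncard (by push_cast; exact ball_add_one_subset (by simp) x)
      _ ≤ (H.ball x (n + 1)).ncard * (L + 1) := ncard_biUnion_le_ncard_mul _ _ _ fun y _ =>
          (Set.ncard_insert_le _ _).trans (Nat.succ_le_succ (hL y))
      _ ≤ (L + 1) ^ (n + 1) := by rw [pow_succ]; gcongr

lemma ncard_edgeSet_deleteIncidenceSet_add_deg [Finite V] (G : SimpleGraph V) (v : V) :
    (G.deleteIncidenceSet v).edgeSet.ncard + deg G v = G.edgeSet.ncard := by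
  classical
  have hdeg : deg G v = (G.incidenceSet v).ncard :=
    (Nat.card_congr (G.incidenceSetEquivNeighborSet v)).symm
  rw [edgeSet_deleteIncidenceSet, hdeg,
    Set.ncard_sdiff_add_ncard_of_subset (G.incidenceSet_subset v)]

end Degree

section Cut
variable {V : Type*}

/-- The spanning subgraph of `G` formed by the edges across the cut into the two colour classes of
`χ`. -/
def cutGraph (G : SimpleGraph V) (χ : V → Bool) : SimpleGraph V :=
  G ⊓ (⊤ : SimpleGraph Bool).comap χ

lemma cutGraph_adj {G : SimpleGraph V} {χ : V → Bool} {u v : V} :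
    (cutGraph G χ).Adj u v ↔ G.Adj u v ∧ χ u ≠ χ v := by
  simp [cutGraph]

lemma deg_cutGraph_add_deg_cutGraph_update [Finite V] [DecidableEq V] (G : SimpleGraph V)
    (χ : V → Bool) (v : V) :
    deg (cutGraph G χ) v + deg (cutGraph G (Function.update χ v (!χ v))) v = deg G v := by
  have hdisj : Disjoint ((cutGraph G χ).neighborSet v)
      ((cutGraph G (Function.update χ v (!χ v))).neighborSet v) := by
    rw [Set.disjoint_left]
    intro u hu hu'
    simp only [mem_neighborSet, cutGraph_adj] at hu hu'
    grind [hu.1.ne]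
  have hunion : (cutGraph G χ).neighborSet v ∪
      (cutGraph G (Function.update χ v (!χ v))).neighborSet v = G.neighborSet v := by
    ext u
    simp only [Set.mem_union, mem_neighborSet, cutGraph_adj, ← and_or_left, and_iff_left_iff_imp]
    grind [→ Adj.ne]
  rw [deg, deg, ← Set.ncard_union_eq hdisj, hunion, deg]

lemma deleteIncidenceSet_cutGraph_update [DecidableEq V] (G : SimpleGraph V) (χ : V → Bool)
    (v : V) (b : Bool) :
    (cutGraph G (Function.update χ v b)).deleteIncidenceSet v =
      (cutGraph G χ).deleteIncidenceSet v := by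
  ext x y
  simp only [deleteIncidenceSet_adj, cutGraph_adj]
  grind

lemma exists_coloring_deg_le_two_mul_deg [Finite V] (G : SimpleGraph V) :
    ∃ H ≤ G, Nonempty (H.Coloring Bool) ∧ ∀ v, deg G v ≤ 2 * deg H v := by
  classical
  obtain ⟨χ, hχ⟩ := Finite.exists_max fun χ : V → Bool => (cutGraph G χ).edgeSet.ncard
  refine ⟨cutGraph G χ, inf_le_left, ⟨Coloring.mk χ fun h => (cutGraph_adj.mp h).2⟩, fun v => ?_⟩
  have hflip := hχ (Function.update χ v (!χ v))
  rw [← ncard_edgeSet_deleteIncidenceSet_add_deg _ v,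
    ← ncard_edgeSet_deleteIncidenceSet_add_deg (cutGraph G χ) v,
    deleteIncidenceSet_cutGraph_update, Nat.add_le_add_iff_left] at hflip
  have hsum := deg_cutGraph_add_deg_cutGraph_update G χ v
  lia

end Cut

section DoubleCounting
variable {V : Type*} [Finite V] {G H : SimpleGraph V} {R S : Set V}

lemma ncard_mul_le_ncard_mul_of_deg_le {a b : ℕ}
    (hR : ∀ x ∈ R, a ≤ (G.neighborSet x ∩ S).ncard) (hS : ∀ s ∈ S, deg G s ≤ b) :
    R.ncard * a ≤ S.ncard * b := by
  classical
  have := Fintype.ofFinite V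
  rw [Set.ncard_eq_toFinset_card' R, Set.ncard_eq_toFinset_card' S]
  refine Finset.card_mul_le_card_mul G.Adj (fun x hx => ?_) fun s hs => ?_
  · refine (hR x (Set.mem_toFinset.mp hx)).trans_eq ?_
    rw [← Set.ncard_coe_finset]
    congr 1
    ext s
    simp [and_comm]
  · refine le_trans ?_ (hS s (Set.mem_toFinset.mp hs))
    rw [← Set.ncard_coe_finset]
    refine Set.ncard_le_ncard fun x hx => ?_
    simp only [Finset.coe_bipartiteBelow, Set.mem_ofPred_eq] at hx
    exact hx.2.symm

lemma exists_adj_notMem_of_mul_lt_mul {F : V → Set V} {f m Δ k L : ℕ} (hR : R.Nonempty)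
    (hF : ∀ x ∈ R, (F x).ncard ≤ f) (hGR : ∀ x ∈ R, f + m ≤ deg G x)
    (hGS : ∀ s ∈ S, deg G s ≤ Δ) (hHR : ∀ x ∈ R, deg H x ≤ k) (hHS : ∀ s ∈ S, deg H s = L)
    (hSR : ∀ s ∈ S, H.neighborSet s ⊆ R) (hlt : Δ * k < m * L) :
    ∃ x ∈ R, ∃ s, G.Adj x s ∧ s ∉ S ∧ s ∉ F x := by
  by_contra! hcon
  have hmany : ∀ x ∈ R, m ≤ (G.neighborSet x ∩ S).ncard := fun x hx => by
    have hsub : G.neighborSet x ⊆ F x ∪ (G.neighborSet x ∩ S) := fun s hs =>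
      or_iff_not_imp_right.mpr fun h => hcon x hx s hs fun hsS => h ⟨hs, hsS⟩
    have hcard : deg G x ≤ (F x).ncard + (G.neighborSet x ∩ S).ncard :=
      (Set.ncard_le_ncard hsub).trans (Set.ncard_union_le _ _)
    have := hF x hx
    have := hGR x hx
    lia
  have hG : R.ncard * m ≤ S.ncard * Δ := ncard_mul_le_ncard_mul_of_deg_le hmany hGS
  have hH : S.ncard * L ≤ R.ncard * k := ncard_mul_le_ncard_mul_of_deg_le
    (fun s hs => by rw [Set.inter_eq_left.mpr (hSR s hs)]; exact (hHS s hs).ge) hHR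
  have hpos : 0 < R.ncard := hR.ncard_pos
  refine lt_irrefl (R.ncard * (Δ * k)) ?_
  calc R.ncard * (Δ * k) < R.ncard * (m * L) := by gcongr
    _ = R.ncard * m * L := by ring
    _ ≤ S.ncard * Δ * L := by gcongr
    _ = Δ * (S.ncard * L) := by ring
    _ ≤ Δ * (R.ncard * k) := by gcongr
    _ = R.ncard * (Δ * k) := by ring

end DoubleCounting

section Exchange
variable {V : Type*} {G H K : SimpleGraph V} {g : ℕ∞} {k L : ℕ}

/-- The sum of the degrees of `H` cut off at `k`; when this potential is largest, every vertex is
supposed to have degree at least `k`. -/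
noncomputable def truncatedDegSum [Fintype V] (k : ℕ) (H : SimpleGraph V) : ℕ :=
  ∑ v, min (deg H v) k

lemma truncatedDegSum_lt [Fintype V] {v : V} (hle : ∀ u, min (deg H u) k ≤ deg K u)
    (hk : deg H v < k) (hlt : deg H v < deg K v) : truncatedDegSum k H < truncatedDegSum k K :=
  Finset.sum_lt_sum (fun u _ => le_min (hle u) (min_le_right _ _))
    ⟨v, Finset.mem_univ v, by lia⟩

/-- The competitors of the extremal argument: subgraphs of `G` of girth at least `g` and maximum
degree at most `L`. -/
structure IsAdmissible (G : SimpleGraph V) (g : ℕ∞) (L : ℕ) (H : SimpleGraph V) : Prop where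
  le : H ≤ G
  le_egirth : g ≤ H.egirth
  deg_le : ∀ v, deg H v ≤ L

lemma isAdmissible_bot (G : SimpleGraph V) (g : ℕ∞) (L : ℕ) : IsAdmissible G g L ⊥ :=
  ⟨bot_le, by simp, fun v => by simp [deg]⟩

/-- `K` is obtained from `H` by exchanging edges at `S` so that the degree of `v` goes up by one and
that of `x` goes down by one (nothing happens to the degrees if `x = v`). -/
structure IsDegreeTransfer [DecidableEq V] (G : SimpleGraph V) (g : ℕ∞) (L : ℕ)
    (H : SimpleGraph V) (v : V) (S : Set V) (x : V) (K : SimpleGraph V) : Prop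
    extends IsAdmissible G g L K where
  deg_add_single : deg K + Pi.single x 1 = deg H + Pi.single v 1
  adj_iff : ∀ a ∉ S, ∀ b ∉ S, (K.Adj a b ↔ H.Adj a b)

namespace IsDegreeTransfer
variable [DecidableEq V] {S : Set V} {v x s y : V}

lemma refl (hH : IsAdmissible G g L H) (v : V) (S : Set V) : IsDegreeTransfer G g L H v S v H :=
  ⟨hH, rfl, fun _ _ _ _ => Iff.rfl⟩

lemma mono {T : Set V} (hK : IsDegreeTransfer G g L H v S x K) (hST : S ⊆ T) :
    IsDegreeTransfer G g L H v T x K :=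
  ⟨hK.toIsAdmissible, hK.deg_add_single,
    fun a ha b hb => hK.adj_iff a (mt (@hST a) ha) b (mt (@hST b) hb)⟩

lemma deg_le_of_maximalFor [Fintype V] (hK : IsDegreeTransfer G g L H v S x K)
    (hH : MaximalFor (IsAdmissible G g L) (truncatedDegSum k) H) (hv : deg H v < k) :
    deg H x ≤ k := by
  by_contra! hx
  have hxv : x ≠ v := by rintro rfl; lia
  have hdeg (u : V) := congrFun hK.deg_add_single u
  simp only [Pi.add_apply, Pi.single_apply] at hdeg
  have hlt : truncatedDegSum k H < truncatedDegSum k K :=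
    truncatedDegSum_lt (fun u => by grind) hv (by grind)
  exact hlt.not_ge (hH.2 hK.toIsAdmissible hlt.le)

lemma deg_sup_edge [Finite V] (hK : IsDegreeTransfer G g L H v S x K) (hne : x ≠ s)
    (hn : ¬ K.Adj x s) : deg (K ⊔ edge x s) = deg H + Pi.single v 1 + Pi.single s 1 := by
  rw [_root_.deg_sup_edge hne hn, hK.deg_add_single]

lemma le_egirth_sup_edge (hK : IsDegreeTransfer G g L H v S x K) (hg : g ≤ K.edist x s + 1) :
    g ≤ (K ⊔ edge x s).egirth :=
  (le_min hg hK.le_egirth).trans (min_edist_add_one_egirth_le_egirth_sup_edge K x s)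

lemma sup_edge_le (hK : IsDegreeTransfer G g L H v S x K) (hxs : G.Adj x s) :
    K ⊔ edge x s ≤ G :=
  sup_le hK.le ((edge_le_iff G).mpr (Or.inr hxs))

lemma deg_eq_of_maximalFor [Fintype V] (hK : IsDegreeTransfer G g L H v S x K)
    (hH : MaximalFor (IsAdmissible G g L) (truncatedDegSum k) H) (hv : deg H v < k) (hkL : k ≤ L)
    (hxs : G.Adj x s) (hn : ¬ K.Adj x s) (hg : g ≤ K.edist x s + 1) (hsv : s ≠ v) :
    deg H s = L := by
  by_contra hs
  have hdeg (u : V) := congrFun (hK.deg_sup_edge hxs.ne hn) u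
  simp only [Pi.add_apply, Pi.single_apply] at hdeg
  have hadm : IsAdmissible G g L (K ⊔ edge x s) :=
    ⟨hK.sup_edge_le hxs, hK.le_egirth_sup_edge hg, fun u => by grind [hH.1.deg_le u]⟩
  have hlt : truncatedDegSum k H < truncatedDegSum k (K ⊔ edge x s) :=
    truncatedDegSum_lt (fun u => by grind) hv (by grind)
  exact hlt.not_ge (hH.2 hadm hlt.le)

lemma exchange [Finite V] (hK : IsDegreeTransfer G g L H v S x K)
    (hH : IsAdmissible G g L H) (hv : deg H v < L)
    (hxs : G.Adj x s) (hn : ¬ K.Adj x s) (hg : g ≤ K.edist x s + 1) (hsy : K.Adj s y) :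
    IsDegreeTransfer G g L H v (insert s S) y ((K ⊔ edge x s) \ edge s y) := by
  have hsum : deg ((K ⊔ edge x s) \ edge s y) + Pi.single y 1 = deg H + Pi.single v 1 := by
    have hdel := deg_sdiff_edge (H := K ⊔ edge x s) (Or.inl hsy)
    rw [hK.deg_sup_edge hxs.ne hn, add_right_comm] at hdel
    exact add_right_cancel hdel
  refine ⟨⟨sdiff_le.trans (hK.sup_edge_le hxs), (hK.le_egirth_sup_edge hg).trans
    (egirth_anti sdiff_le), fun u => ?_⟩, hsum, fun a ha b hb => ?_⟩
  · have hu := congrFun hsum u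
    simp only [Pi.add_apply, Pi.single_apply] at hu
    grind [hH.deg_le u]
  · rw [Set.mem_insert_iff, not_or] at ha hb
    simp [edge_adj, ha.1, hb.1, hK.adj_iff a ha.2 b hb.2]

end IsDegreeTransfer

/-- The vertices on the side of `v` that can give up one unit of degree to `v` by exchanging edges
at `S`. -/
def degreeDonors [DecidableEq V] (G : SimpleGraph V) (g : ℕ∞) (L : ℕ) (C : G.Coloring Bool)
    (H : SimpleGraph V) (v : V) (S : Set V) : Set V :=
  {x | C x = C v ∧ ∃ K, IsDegreeTransfer G g L H v S x K}

/-- A set of vertices of full degree `L` on the side opposite to `v`, all of whose `H`-neighbours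
are donors: the closure condition of an alternating tree grown from `v`. -/
structure IsAlternatingSet [DecidableEq V] (G : SimpleGraph V) (g : ℕ∞) (L : ℕ)
    (C : G.Coloring Bool) (H : SimpleGraph V) (v : V) (S : Set V) : Prop where
  color_ne : ∀ s ∈ S, C s ≠ C v
  deg_eq : ∀ s ∈ S, deg H s = L
  neighborSet_subset : ∀ s ∈ S, H.neighborSet s ⊆ degreeDonors G g L C H v S

namespace IsAlternatingSet
variable [DecidableEq V] {C : G.Coloring Bool} {S : Set V} {v x s : V}

lemma empty : IsAlternatingSet G g L C H v ∅ :=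
  ⟨fun _ h => h.elim, fun _ h => h.elim, fun _ h => h.elim⟩

lemma insert [Fintype V] (hS : IsAlternatingSet G g L C H v S)
    (hH : MaximalFor (IsAdmissible G g L) (truncatedDegSum k) H) (hv : deg H v < k) (hkL : k ≤ L)
    (hx : C x = C v) (hK : IsDegreeTransfer G g L H v S x K) (hxs : G.Adj x s) (hs : s ∉ S)
    (hn : ¬ K.Adj x s) (hg : g ≤ K.edist x s + 1) :
    IsAlternatingSet G g L C H v (insert s S) := by
  have hsv : C s ≠ C v := hx ▸ (C.valid hxs).symm
  refine ⟨?_, ?_, ?_⟩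
  · exact Set.forall_mem_insert.mpr ⟨hsv, hS.color_ne⟩
  · exact Set.forall_mem_insert.mpr
      ⟨hK.deg_eq_of_maximalFor hH hv hkL hxs hn hg (ne_of_apply_ne C hsv), hS.deg_eq⟩
  · refine Set.forall_mem_insert.mpr ⟨fun y hsy => ?_, fun t ht y hty => ?_⟩
    · have hys : C y ≠ C s := (C.valid (hH.1.le hsy)).symm
      have hyv : C y = C v :=
        (Bool.eq_not_of_ne hys).trans (Bool.eq_not_of_ne hsv.symm).symm
      have hyS : y ∉ S := fun hy => hS.color_ne y hy hyv
      exact ⟨hyv, _, hK.exchange hH.1 (hv.trans_le hkL) hxs hn hg ((hK.adj_iff s hs y hyS).mpr hsy)⟩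
    · obtain ⟨hyv, K', hK'⟩ := hS.neighborSet_subset t ht hty
      exact ⟨hyv, K', hK'.mono (Set.subset_insert s S)⟩

lemma exists_insert [Fintype V] {n m Δ : ℕ} (hS : IsAlternatingSet G (n + 2) L C H v S)
    (hH : MaximalFor (IsAdmissible G (n + 2) L) (truncatedDegSum k) H) (hv : deg H v < k)
    (hkL : k ≤ L) (hn : 1 ≤ n) (hlow : ∀ u, (L + 1) ^ n + m ≤ deg G u)
    (hup : ∀ u, deg G u ≤ Δ) (hlt : Δ * k < m * L) :
    ∃ s ∉ S, IsAlternatingSet G (n + 2) L C H v (Insert.insert s S) := by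
  have hvR : v ∈ degreeDonors G (n + 2) L C H v S := ⟨rfl, H, .refl hH.1 v S⟩
  have hdonor : ∀ x ∈ degreeDonors G (n + 2) L C H v S,
    ∃ K, IsDegreeTransfer G (n + 2) L H v S x K := fun x hx => hx.2
  choose! K hK using hdonor
  obtain ⟨x, hx, s, hxs, hs, hball⟩ := exists_adj_notMem_of_mul_lt_mul
    (F := fun x => (K x).ball x (n + 1)) ⟨v, hvR⟩
    (fun x hx => ncard_ball_le (hK x hx).deg_le x n) (fun x _ => hlow x) (fun s _ => hup s)
    (fun x hx => (hK x hx).deg_le_of_maximalFor hH hv) hS.deg_eq hS.neighborSet_subset hlt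
  have hfar : (n + 1 : ℕ∞) ≤ (K x).edist x s := by
    rw [edist_comm]
    exact not_lt.mp hball
  have hnadj : ¬ (K x).Adj x s := fun h => by
    rw [edist_eq_one_iff_adj.mpr h] at hfar
    have : n + 1 ≤ 1 := by exact_mod_cast hfar
    lia
  refine ⟨s, hs, hS.insert hH hv hkL hx.1 (hK x hx) hxs hs hnadj ?_⟩
  calc (n + 2 : ℕ∞) = n + 1 + 1 := by rw [add_assoc, one_add_one_eq_two]
    _ ≤ (K x).edist x s + 1 := by gcongr

end IsAlternatingSet

theorem exists_le_egirth_forall_le_deg_of_coloring [Finite V] (C : G.Coloring Bool)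
    {n m Δ : ℕ} (hn : 1 ≤ n) (hlow : ∀ v, (L + 1) ^ n + m ≤ deg G v) (hup : ∀ v, deg G v ≤ Δ)
    (hlt : Δ * k < m * L) : ∃ H ≤ G, (n + 2 : ℕ∞) ≤ H.egirth ∧ ∀ v, k ≤ deg H v := by
  classical
  have := Fintype.ofFinite V
  obtain ⟨H, hH⟩ := (Set.toFinite {H | IsAdmissible G (n + 2) L H}).exists_maximalFor
    (truncatedDegSum k) _ ⟨⊥, isAdmissible_bot G _ L⟩
  refine ⟨H, hH.1.le, hH.1.le_egirth, ?_⟩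
  by_contra! hcon
  obtain ⟨v, hv⟩ := hcon
  have hkL : k ≤ L := by
    have hmΔ : m ≤ Δ := (Nat.le_add_left m _).trans ((hlow v).trans (hup v))
    by_contra! hLk
    exact hlt.not_ge (Nat.mul_le_mul hmΔ hLk.le)
  obtain ⟨S, hS⟩ := (Set.toFinite {S | IsAlternatingSet G (n + 2) L C H v S}).exists_maximal
    ⟨∅, .empty⟩
  obtain ⟨s, hs, hsS⟩ := hS.1.exists_insert hH hv hkL hn hlow hup hlt
  exact hs (hS.2 hsS (Set.subset_insert s S) (Set.mem_insert s S))

end Exchange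

section AlmostRegular
variable {V : Type*}

theorem exists_coloring_le_egirth_forall_le_deg [Finite V] {G : SimpleGraph V} {n k q d : ℕ}
    (hn : 1 ≤ n) (hk : 1 ≤ k) (hd : (4 * (4 * q + 2) * k) ^ n ≤ d)
    (hG : ∀ v, d ≤ deg G v ∧ deg G v ≤ q * d) :
    ∃ H ≤ G, Nonempty (H.Coloring Bool) ∧ (n + 2 : ℕ∞) ≤ H.egirth ∧ ∀ v, k ≤ deg H v := by
  obtain ⟨B, hBG, ⟨C⟩, hB⟩ := exists_coloring_deg_le_two_mul_deg G
  set f := ((4 * q + 1) * k + 1) ^ n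
  have hf : 0 < f := by positivity
  have hfd : 4 * f ≤ d := by
    have hbase : (4 * q + 1) * k + 1 ≤ (4 * q + 2) * k := by lia
    calc 4 * f ≤ 4 ^ n * ((4 * q + 2) * k) ^ n :=
          Nat.mul_le_mul (Nat.le_self_pow (by lia) 4) (Nat.pow_le_pow_left hbase n)
      _ = (4 * (4 * q + 2) * k) ^ n := by rw [← mul_pow, mul_assoc]
      _ ≤ d := hd
  obtain ⟨m, hm⟩ : ∃ m, f + m = (d + 1) / 2 := ⟨(d + 1) / 2 - f, by lia⟩
  have hlt : q * d * k < m * ((4 * q + 1) * k) := by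
    have hdm : d ≤ 4 * m := by lia
    calc q * d * k ≤ q * (4 * m) * k := by gcongr
      _ < q * (4 * m) * k + m * k := Nat.lt_add_of_pos_right (Nat.mul_pos (by lia) hk)
      _ = m * ((4 * q + 1) * k) := by ring
  obtain ⟨H, hHB, hH, hdeg⟩ := exists_le_egirth_forall_le_deg_of_coloring C hn
    (fun v => by have := hB v; have := (hG v).1; lia)
    (fun v => (deg_mono hBG v).trans (hG v).2) hlt
  exact ⟨H, hHB.trans hBG, ⟨C.comp (Hom.ofLE hHB)⟩, hH, hdeg⟩

lemma exists_nat_mul_pow_le {A n d : ℕ} (hA : 1 ≤ A) (hn : 1 ≤ n) (hd : A ^ n ≤ d) :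
    ∃ k : ℕ, 1 ≤ k ∧ (A * k) ^ n ≤ d ∧ 1 / (2 * A) * (d : ℝ) ^ (1 / n : ℝ) ≤ k := by
  set y : ℝ := (d : ℝ) ^ (1 / n : ℝ) with hy
  have hA' : (0 : ℝ) < A := by exact_mod_cast hA
  have hyn : y ^ n = d := by
    rw [hy, one_div, Real.rpow_inv_natCast_pow (by positivity) (by lia)]
  have hAy : (A : ℝ) ≤ y := by
    refine le_of_pow_le_pow_left₀ (n := n) (by lia) (by positivity) ?_
    rw [hyn]
    exact_mod_cast hd
  have hk : 1 ≤ ⌊y / A⌋₊ := Nat.one_le_floor_iff _ |>.mpr ((one_le_div hA').mpr hAy)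
  have hk' : (1 : ℝ) ≤ ⌊y / A⌋₊ := by exact_mod_cast hk
  refine ⟨⌊y / A⌋₊, hk, ?_, ?_⟩
  · have hle : A * (⌊y / A⌋₊ : ℝ) ≤ y := by
      rw [← le_div_iff₀' hA']
      exact Nat.floor_le (by positivity)
    have : (A * (⌊y / A⌋₊ : ℝ)) ^ n ≤ d := hyn ▸ pow_le_pow_left₀ (by positivity) hle n
    exact_mod_cast this
  · calc 1 / (2 * A) * y = y / A / 2 := by field_simp
      _ ≤ (⌊y / A⌋₊ + 1) / 2 := by gcongr; exact (Nat.lt_floor_add_one _).le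
      _ ≤ ⌊y / A⌋₊ := by linarith

end AlmostRegular

theorem statement9_general.{u} (r q : ℕ) (hr : 1 ≤ r) :
    ∃ (c : ℝ) (d₀ : ℕ), 0 < c ∧
      ∀ d : ℕ, d₀ ≤ d →
        ∀ (V : Type u) [Finite V] (G : SimpleGraph V),
          (∀ v, d ≤ deg G v ∧ deg G v ≤ q * d) →
          ∃ H : SimpleGraph V, H ≤ G ∧
            (∀ j : ℕ, 3 ≤ j → j ≤ 2 * r + 1 → ¬ ContainsCopy (cycleGraph j) H) ∧
            ∀ v : V, c * (d : ℝ) ^ ((1 : ℝ) / (2 * (r : ℝ) - 1)) ≤ (deg H v : ℝ) := by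
  set A := 4 * (4 * q + 2)
  set n := 2 * r - 1
  have hn : 1 ≤ n := by lia
  refine ⟨1 / (2 * A), A ^ n, by positivity, fun d hd V _ G hG => ?_⟩
  obtain ⟨k, hk, hkd, hck⟩ := exists_nat_mul_pow_le (by lia) hn hd
  obtain ⟨H, hHG, ⟨C⟩, hH, hdeg⟩ := exists_coloring_le_egirth_forall_le_deg hn hk hkd hG
  have hgirth : ((n + 2 + 1 : ℕ) : ℕ∞) ≤ H.egirth :=
    le_egirth_of_coloring_of_odd_le C ⟨r, by lia⟩ (by exact_mod_cast hH)
  have hcast : (n : ℝ) = 2 * r - 1 := by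
    rw [Nat.cast_sub (by lia)]
    push_cast
    ring
  refine ⟨H, hHG, fun j hj hjr => ?_, fun v => ?_⟩
  · refine not_containsCopy_cycleGraph_of_lt_egirth hj (lt_of_lt_of_le ?_ hgirth)
    exact_mod_cast (by lia : j < n + 2 + 1)
  · rw [← hcast]
    exact hck.trans (by exact_mod_cast hdeg v)

theorem statement9 (r : ℕ) (hr : 1 ≤ r) :
    ∃ (c : ℝ) (d₀ : ℕ), 0 < c ∧
      ∀ d : ℕ, d₀ ≤ d →
        ∀ (V : Type) [Fintype V] (G : SimpleGraph V), RegularDeg G d →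
          ∃ H : SimpleGraph V, H ≤ G ∧
            (∀ j : ℕ, 3 ≤ j → j ≤ 2 * r + 1 → ¬ ContainsCopy (cycleGraph j) H) ∧
            ∀ v : V, c * (d : ℝ) ^ ((1 : ℝ) / (2 * (r : ℝ) - 1)) ≤ (deg H v : ℝ) := by
  obtain ⟨c, d₀, hc, h⟩ := statement9_general r 1 hr
  exact ⟨c, d₀, hc, fun d hd V _ G hG => h d hd V G fun v => by simp [hG v]⟩
end
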